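/- arXiv:cs/0610138 — 8 statements merged into one kernel-verified Lean document; each statement's English description precedes it below -/
import Mathlib

section
/- (Theorem 3, achievability for the BEC.) Fix an erasure probability beta in (0,1) and a rate R' in bits per channel use with 0 < R' < 1 - beta; let R = R' ln 2. Then for every eps > 0 there exists d_0 such that for every delay d >= d_0 there exist a rate-R encoder with noiseless feedback for BEC(beta) and a delay-d rate-R decoder such that for every bit position i >= 1, P(hat B_i(ceil(i/R') + d) != B_i) <= exp(-d (1 - eps) E_a^{bec}(R')). In particular every fixed-delay exponent alpha < E_a^{bec}(R') is asymptotically achievable at rate R over BEC(beta) with noiseless feedback. -/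
open scoped BigOperators

noncomputable section

/-- The binary erasure channel `BEC(β)`: inputs `Bool`, outputs `Option Bool`
(`none` is the erasure symbol `e`), with `p_{x|x} = 1-β` and `p_{e|x} = β`. -/
def becChannel (β : ℝ) : Bool → Option Bool → ℝ :=
  fun x y => if y = some x then 1 - β else if y = none then β else 0

/-- Binary Kullback-Leibler divergence `D(p‖q)` in nats. -/
def klBin (p q : ℝ) : ℝ :=
  p * Real.log (p / q) + (1 - p) * Real.log ((1 - p) / (1 - q))

/-- The fixed-delay exponent of the BEC,
`E_a^{bec}(R') = inf_{0 ≤ λ < 1} D(λR' ‖ 1-β)/(1-λ)` (in nats, `R'` in bits/use). -/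
def EaBec (β R' : ℝ) : ℝ :=
  sInf {e | ∃ lam : ℝ, 0 ≤ lam ∧ lam < 1 ∧ e = klBin (lam * R') (1 - β) / (1 - lam)}

/-- Extend a finite bit string by `false`s. -/
def extendB {M : ℕ} (b : Fin M → Bool) : ℕ → Bool :=
  fun k => if h : k < M then b ⟨k, h⟩ else false

/-- Extend a finite output string arbitrarily. -/
def extendY {Y : Type} [Nonempty Y] {n : ℕ} (y : Fin n → Y) : ℕ → Y :=
  fun t => if h : t < n then y ⟨t, h⟩ else Classical.arbitrary Y

/-- A rate-`R` encoder with noiseless feedback: the channel input at the (1-indexed)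
time `t+1` may depend only on the past channel outputs `Y_1^t` and on the first
`⌊R'·(t+1)⌋` message bits (`R'` is the rate in bits per channel use). -/
def IsFeedbackEncoder {X Y : Type} (R' : ℝ) (enc : ℕ → (ℕ → Y) → (ℕ → Bool) → X) : Prop :=
  ∀ t : ℕ, ∀ ys ys' : ℕ → Y, ∀ b b' : ℕ → Bool,
    (∀ s, s < t → ys s = ys' s) →
    (∀ k, k < Nat.floor (R' * ((t : ℝ) + 1)) → b k = b' k) →
    enc t ys b = enc t ys' b'

/-- The probability that a delay decoder `dec` errs on the (1-indexed) message bit `i`,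
for a feedback encoder, computed under the explicit finite product law
`P(b,y) = 2^{-M} ∏_t p_{y_t | enc_t(y_1^{t-1}, b)}` on `M` i.i.d. fair message bits and
`n` channel outputs. -/
def bitErrProbFb {X Y : Type} [Fintype X] [Fintype Y] [Nonempty Y] (P : X → Y → ℝ)
    (enc : ℕ → (ℕ → Y) → (ℕ → Bool) → X) (n M : ℕ) (dec : (Fin n → Y) → Bool)
    (i : ℕ) : ℝ :=
  ∑ b : Fin M → Bool, ∑ y : Fin n → Y,
    ((2 : ℝ) ^ M)⁻¹ * (∏ t : Fin n, P (enc t (extendY y) (extendB b)) (y t)) *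
      (if dec y = extendB b (i - 1) then 0 else 1)

/-- The number of bits delivered before time `t` when, at each time `s` with a nonempty queue,
the next bit is sent until it is not erased; `A s` bits have arrived by time `s`. -/
def delivered (A : ℕ → ℕ) (ys : ℕ → Option Bool) : ℕ → ℕ
  | 0 => 0
  | t + 1 => if delivered A ys t < A t ∧ ys t ≠ none then delivered A ys t + 1
      else delivered A ys t

/-- The number of unerased outputs at times in `[T, n)`. -/
def unerased (ys : ℕ → Option Bool) (T n : ℕ) : ℕ :=
  ∑ t ∈ Finset.range n, if T ≤ t ∧ ys t ≠ none then 1 else 0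

/-- The encoder that repeats the oldest undelivered bit until it is received. -/
def queueEnc (A : ℕ → ℕ) (t : ℕ) (ys : ℕ → Option Bool) (b : ℕ → Bool) : Bool :=
  if delivered A ys t < A t then b (delivered A ys t) else false

open Classical in
/-- The decoder for bit `k` (0-indexed) matching `queueEnc`. -/
def queueDec (A : ℕ → ℕ) (k n : ℕ) (ys : ℕ → Option Bool) : Bool :=
  decide (∃ t < n, delivered A ys t = k ∧ k < A t ∧ ys t = some true)

lemma delivered_congr (A : ℕ → ℕ) {ys ys' : ℕ → Option Bool} {t : ℕ}
    (h : ∀ s, s < t → ys s = ys' s) : delivered A ys t = delivered A ys' t := by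
  induction t with
  | zero => rfl
  | succ t ih =>
    simp only [delivered]
    rw [ih fun s hs => h s (by omega), h t (by omega)]

lemma queueEnc_congr (A : ℕ → ℕ) {ys ys' : ℕ → Option Bool} {b b' : ℕ → Bool} {t : ℕ}
    (h : ∀ s, s < t → ys s = ys' s) (hb : ∀ k, k < A t → b k = b' k) :
    queueEnc A t ys b = queueEnc A t ys' b' := by
  simp only [queueEnc, delivered_congr A h]
  split_ifs with hlt
  · exact hb _ hlt
  · rfl

/-- If the `k`-th bit was delivered before time `n`, there is a time at which this happened. -/
lemma exists_delivery (A : ℕ → ℕ) (ys : ℕ → Option Bool) {k n : ℕ}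
    (h : k < delivered A ys n) :
    ∃ t < n, delivered A ys t = k ∧ k < A t ∧ ys t ≠ none := by
  induction n with
  | zero => simp [delivered] at h
  | succ n ih =>
    by_cases hk : k < delivered A ys n
    · obtain ⟨t, ht, h'⟩ := ih hk
      exact ⟨t, by omega, h'⟩
    · simp only [delivered] at h
      split_ifs at h with hc
      · have hkn : delivered A ys n = k := by omega
        exact ⟨n, by omega, hkn, hkn ▸ hc.1, hc.2⟩
      · omega

/-- If every output is an erasure or the channel input, a decoding error on bit `k` forces
that bit to be undelivered. -/
lemma delivered_le_of_queueDec_ne (A : ℕ → ℕ) (ys : ℕ → Option Bool) (b : ℕ → Bool) {k n : ℕ}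
    (hy : ∀ t < n, ys t = none ∨ ys t = some (queueEnc A t ys b))
    (h : queueDec A k n ys ≠ b k) : delivered A ys n ≤ k := by
  by_contra! hk
  have key : ∀ t < n, delivered A ys t = k → k < A t → ys t ≠ none → ys t = some (b k) := by
    intro t ht h1 h2 h3
    have := (hy t ht).resolve_left h3
    rwa [queueEnc, h1, if_pos h2] at this
  obtain ⟨t, ht, h1, h2, h3⟩ := exists_delivery A ys hk
  apply h
  cases hb : b k with
  | true =>
    have := key t ht h1 h2 h3
    rw [hb] at this
    simpa [queueDec] using ⟨t, ht, h1, h2, this⟩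
  | false =>
    simp only [queueDec, decide_eq_false_iff_not]
    rintro ⟨t', ht', h1', h2', h3'⟩
    have := key t' ht' h1' h2' (by simp [h3'])
    simp [h3', hb] at this

/-- Lindley-type lower bound: the queue was last empty at some time `T`. -/
lemma exists_add_unerased_le_delivered (A : ℕ → ℕ) (ys : ℕ → Option Bool) (n : ℕ) :
    ∃ T ≤ n, (if T = 0 then 0 else A (T - 1)) + unerased ys T n ≤ delivered A ys n := by
  induction n with
  | zero => exact ⟨0, le_rfl, by simp [unerased, delivered]⟩
  | succ n ih =>
    by_cases hlt : delivered A ys n < A n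
    · obtain ⟨T, hT, h⟩ := ih
      refine ⟨T, by omega, ?_⟩
      have hsucc : unerased ys T (n + 1) = unerased ys T n +
          if T ≤ n ∧ ys n ≠ none then 1 else 0 := Finset.sum_range_succ _ _
      by_cases hy : ys n = none
      · simpa [hsucc, delivered, hlt, hy] using h
      · simp only [hsucc, delivered, hlt, hy, hT, ne_eq, not_false_eq_true, and_self, if_true]
        omega
    · refine ⟨n + 1, le_rfl, ?_⟩
      have h0 : unerased ys (n + 1) (n + 1) = 0 := by
        refine Finset.sum_eq_zero fun t ht => ?_
        have := Finset.mem_range.1 ht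
        rw [if_neg (by omega)]
      simp [h0, delivered, hlt]
      omega

lemma extendY_snoc_of_lt {Y : Type} [Nonempty Y] {n : ℕ} (y : Fin n → Y) (v : Y) {s : ℕ}
    (hs : s < n) : extendY (Fin.snoc (α := fun _ => Y) y v) s = extendY y s := by
  have hs' : s < n + 1 := by omega
  simp only [extendY, hs, hs', dif_pos]
  exact Fin.snoc_castSucc (α := fun _ => Y) v y ⟨s, hs⟩

/-- Summing a causal product over all output strings, one coordinate at a time. -/
lemma sum_prod_causal {Y : Type} [Fintype Y] [Nonempty Y] (g : ℕ → (ℕ → Y) → Y → ℝ)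
    (c : ℕ → ℝ) (hg : ∀ t ys ys' v, (∀ s, s < t → ys s = ys' s) → g t ys v = g t ys' v)
    (hc : ∀ t ys, ∑ v, g t ys v = c t) (n : ℕ) :
    ∑ y : Fin n → Y, ∏ t : Fin n, g t (extendY y) (y t) = ∏ t ∈ Finset.range n, c t := by
  induction n with
  | zero => simp
  | succ n ih =>
    rw [← (Fin.snocEquiv fun _ : Fin (n + 1) => Y).sum_comp, Fintype.sum_prod_type,
      Finset.sum_comm, Finset.prod_range_succ, ← ih, Finset.sum_mul]
    refine Finset.sum_congr rfl fun y _ => ?_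
    rw [← hc n (extendY y), Finset.mul_sum]
    refine Finset.sum_congr rfl fun v _ => ?_
    simp only [Fin.snocEquiv_apply]
    rw [Fin.prod_univ_castSucc]
    congr 1
    · refine Finset.prod_congr rfl fun t _ => ?_
      rw [Fin.snoc_castSucc, Fin.val_castSucc]
      exact hg _ _ _ _ fun s hs => extendY_snoc_of_lt y v (hs.trans t.2)
    · rw [Fin.snoc_last, Fin.val_last]
      exact hg _ _ _ _ fun s hs => extendY_snoc_of_lt y v hs

/-- The moment generating function of the number of unerased outputs in `[T, n)`. -/
lemma sum_becChannel_mul_exp_unerased (β : ℝ) (enc : ℕ → (ℕ → Option Bool) → Bool)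
    (henc : ∀ t ys ys', (∀ s, s < t → ys s = ys' s) → enc t ys = enc t ys')
    (s : ℝ) (T n : ℕ) :
    ∑ y : Fin n → Option Bool, (∏ t : Fin n, becChannel β (enc t (extendY y)) (y t)) *
      Real.exp (-s * unerased (extendY y) T n) = (β + (1 - β) * Real.exp (-s)) ^ (n - T) := by
  have h := sum_prod_causal
    (fun t ys v => becChannel β (enc t ys) v *
      if T ≤ t ∧ v ≠ none then Real.exp (-s) else 1)
    (fun t => if T ≤ t then β + (1 - β) * Real.exp (-s) else 1)
    (fun t ys ys' v hy => by simp only [henc t ys ys' hy])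
    (fun t ys => by
      by_cases ht : T ≤ t <;> cases enc t ys <;>
        simp [Fintype.sum_option, becChannel, ht]) n
  have hcard : ∏ t ∈ Finset.range n, (if T ≤ t then β + (1 - β) * Real.exp (-s) else 1)
      = (β + (1 - β) * Real.exp (-s)) ^ (n - T) := by
    rw [Finset.prod_ite, Finset.prod_const_one, mul_one, Finset.prod_const]
    congr 1
    rw [← Nat.card_Ico]
    congr 1
    ext t
    simp [and_comm]
  rw [← hcard, ← h]
  refine Finset.sum_congr rfl fun y _ => ?_
  rw [Finset.prod_mul_distrib]
  congr 1
  rw [unerased, Nat.cast_sum, Finset.mul_sum, Real.exp_sum, Finset.prod_range]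
  refine Finset.prod_congr rfl fun t _ => ?_
  have : extendY y t = y t := by simp [extendY]
  rw [this]
  split_ifs <;> simp

/-- The exponent `-log (β + (1-β) e^{-s})` of a Bernoulli(`1-β`) moment generating function. -/
def becCgf (β s : ℝ) : ℝ := -Real.log (β + (1 - β) * Real.exp (-s))

lemma becMgf_pos {β : ℝ} (h0 : 0 < β) (h1 : β < 1) (s : ℝ) :
    0 < β + (1 - β) * Real.exp (-s) := by
  have := Real.exp_pos (-s)
  nlinarith [mul_pos (sub_pos.2 h1) this]

lemma hasDerivAt_becCgf {β : ℝ} (h0 : 0 < β) (h1 : β < 1) (s : ℝ) :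
    HasDerivAt (becCgf β)
      ((1 - β) * Real.exp (-s) / (β + (1 - β) * Real.exp (-s))) s := by
  have h := ((((hasDerivAt_neg s).exp).const_mul (1 - β)).const_add β).log
    (becMgf_pos h0 h1 s).ne' |>.neg
  rw [mul_neg_one, mul_neg, neg_div, neg_neg] at h
  exact h

lemma klBin_nonneg {p q : ℝ} (hp0 : 0 ≤ p) (hp1 : p ≤ 1) (hq0 : 0 < q) (hq1 : q < 1) :
    0 ≤ klBin p q := by
  have key : ∀ x y : ℝ, 0 ≤ x → 0 < y → x - y ≤ x * Real.log (x / y) := by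
    intro x y hx hy
    rcases hx.eq_or_lt with rfl | hx
    · simp [hy.le]
    · have h := mul_le_mul_of_nonneg_left (Real.one_sub_inv_le_log_of_pos (div_pos hx hy)) hx.le
      have e : x * (1 - (x / y)⁻¹) = x - y := by field_simp
      linarith
  have := key p q hp0 hq0
  have := key (1 - p) (1 - q) (by linarith) (by linarith)
  unfold klBin
  linarith

lemma nonneg_of_mem_EaBec_set {β R' : ℝ} (h0 : 0 < β) (h1 : β < 1) (hR0 : 0 < R')
    (hR1 : R' < 1 - β) :
    ∀ e ∈ {e | ∃ lam : ℝ, 0 ≤ lam ∧ lam < 1 ∧ e = klBin (lam * R') (1 - β) / (1 - lam)},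
      0 ≤ e := by
  rintro e ⟨lam, hl0, hl1, rfl⟩
  exact div_nonneg (klBin_nonneg (by positivity) (by nlinarith) (by linarith) (by linarith))
    (by linarith)

lemma EaBec_nonneg {β R' : ℝ} (h0 : 0 < β) (h1 : β < 1) (hR0 : 0 < R') (hR1 : R' < 1 - β) :
    0 ≤ EaBec β R' :=
  Real.sInf_nonneg (nonneg_of_mem_EaBec_set h0 h1 hR0 hR1)

/-- The divergence of the exponentially tilted Bernoulli law from the original one. -/
lemma klBin_tilted {β : ℝ} (h0 : 0 < β) (h1 : β < 1) (s : ℝ) :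
    klBin ((1 - β) * Real.exp (-s) / (β + (1 - β) * Real.exp (-s))) (1 - β) =
      becCgf β s - s * ((1 - β) * Real.exp (-s) / (β + (1 - β) * Real.exp (-s))) := by
  have hz := becMgf_pos h0 h1 s
  have hb : 0 < 1 - β := by linarith
  unfold klBin becCgf
  set z := β + (1 - β) * Real.exp (-s) with hzdef
  have e1 : (1 - β) * Real.exp (-s) / z / (1 - β) = Real.exp (-s) / z := by field_simp
  have e2 : (1 - (1 - β) * Real.exp (-s) / z) / (1 - (1 - β)) = 1 / z := by
    have : 1 - (1 - β) * Real.exp (-s) / z = β / z := by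
      rw [eq_div_iff hz.ne', sub_mul, div_mul_cancel₀ _ hz.ne']
      rw [hzdef]
      ring
    rw [this, sub_sub_cancel]
    field_simp
  rw [e1, e2, Real.log_div (Real.exp_pos _).ne' hz.ne', Real.log_exp, one_div, Real.log_inv]
  ring

/-- Parametric upper bound on the exponent at a positive root of `becCgf β s = s R'`. -/
lemma EaBec_le_becCgf {β R' s : ℝ} (h0 : 0 < β) (h1 : β < 1) (hR0 : 0 < R')
    (hR1 : R' < 1 - β) (hroot : becCgf β s = s * R')
    (hslope : (1 - β) * Real.exp (-s) / (β + (1 - β) * Real.exp (-s)) < R') :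
    EaBec β R' ≤ becCgf β s := by
  have hkl := klBin_tilted h0 h1 s
  have hp0 : 0 ≤ (1 - β) * Real.exp (-s) / (β + (1 - β) * Real.exp (-s)) :=
    div_nonneg (mul_nonneg (by linarith) (Real.exp_pos _).le) (becMgf_pos h0 h1 s).le
  set p := (1 - β) * Real.exp (-s) / (β + (1 - β) * Real.exp (-s))
  have hlt : p / R' < 1 := (div_lt_one hR0).2 hslope
  refine csInf_le ⟨0, fun e he => nonneg_of_mem_EaBec_set h0 h1 hR0 hR1 e he⟩
    ⟨p / R', by positivity, hlt, ?_⟩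
  rw [div_mul_cancel₀ _ hR0.ne', hkl, eq_div_iff (by linarith), hroot]
  field_simp

/-- Above the point where the slope of `becCgf β` equals `R'`, the slope is below `R'`. -/
lemma becCgf_slope_lt {β R' s₀ s : ℝ} (h0 : 0 < β) (h1 : β < 1)
    (hs₀ : (1 - β) * Real.exp (-s₀) / (β + (1 - β) * Real.exp (-s₀)) = R') (hs : s₀ < s) :
    (1 - β) * Real.exp (-s) / (β + (1 - β) * Real.exp (-s)) < R' := by
  rw [← hs₀, div_lt_div_iff₀ (becMgf_pos h0 h1 s) (becMgf_pos h0 h1 s₀)]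
  have hexp : Real.exp (-s) < Real.exp (-s₀) := Real.exp_lt_exp.2 (by linarith)
  nlinarith [mul_pos (mul_pos h0 (sub_pos.2 h1)) (sub_pos.2 hexp)]

lemma becCgf_slope_gt {β R' s₀ s : ℝ} (h0 : 0 < β) (h1 : β < 1)
    (hs₀ : (1 - β) * Real.exp (-s₀) / (β + (1 - β) * Real.exp (-s₀)) = R') (hs : s < s₀) :
    R' < (1 - β) * Real.exp (-s) / (β + (1 - β) * Real.exp (-s)) := by
  rw [← hs₀, div_lt_div_iff₀ (becMgf_pos h0 h1 s₀) (becMgf_pos h0 h1 s)]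
  have hexp : Real.exp (-s₀) < Real.exp (-s) := Real.exp_lt_exp.2 (by linarith)
  nlinarith [mul_pos (mul_pos h0 (sub_pos.2 h1)) (sub_pos.2 hexp)]

/-- Any target strictly below the exponent is beaten by a Chernoff parameter with a strictly
positive margin over the arrival rate. -/
lemma exists_chernoff_parameter {β R' : ℝ} (h0 : 0 < β) (h1 : β < 1) (hR0 : 0 < R')
    (hR1 : R' < 1 - β) {ε : ℝ} (hε : 0 < ε) :
    ∃ s : ℝ, 0 < s ∧ s * R' < becCgf β s ∧ (1 - ε) * EaBec β R' < becCgf β s := by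
  have hb : 0 < 1 - β := by linarith
  have hR2 : 0 < 1 - R' := by linarith
  obtain ⟨s₀, hs₀pos, hs₀⟩ : ∃ s₀ : ℝ, 0 < s₀ ∧
      (1 - β) * Real.exp (-s₀) / (β + (1 - β) * Real.exp (-s₀)) = R' := by
    have hx : 0 < R' * β / ((1 - β) * (1 - R')) := by positivity
    refine ⟨-Real.log (R' * β / ((1 - β) * (1 - R'))), ?_, ?_⟩
    · rw [neg_pos]
      refine Real.log_neg hx ?_
      rw [div_lt_one (by positivity)]
      nlinarith
    · rw [neg_neg, Real.exp_log hx]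
      field_simp
      ring
  set G : ℝ → ℝ := fun s => becCgf β s - s * R' with hG
  have hderiv : ∀ s, HasDerivAt G
      ((1 - β) * Real.exp (-s) / (β + (1 - β) * Real.exp (-s)) - R') s := fun s => by
    have h := (hasDerivAt_becCgf h0 h1 s).sub ((hasDerivAt_id s).mul_const R')
    rw [one_mul] at h
    exact h
  have hcont : Continuous G :=
    continuous_iff_continuousAt.2 fun s => (hderiv s).continuousAt
  have hcontC : Continuous (becCgf β) :=
    continuous_iff_continuousAt.2 fun s => (hasDerivAt_becCgf h0 h1 s).continuousAt
  have hanti : StrictAntiOn G (Set.Ici s₀) := by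
    refine strictAntiOn_of_deriv_neg (convex_Ici s₀) hcont.continuousOn fun s hs => ?_
    rw [interior_Ici] at hs
    rw [(hderiv s).deriv]
    linarith [becCgf_slope_lt h0 h1 hs₀ hs]
  have hmono : StrictMonoOn G (Set.Icc 0 s₀) := by
    refine strictMonoOn_of_deriv_pos (convex_Icc 0 s₀) hcont.continuousOn fun s hs => ?_
    rw [interior_Icc] at hs
    rw [(hderiv s).deriv]
    linarith [becCgf_slope_gt h0 h1 hs₀ hs.2]
  have hGs₀ : 0 < G s₀ := by
    have h := hmono ⟨le_rfl, hs₀pos.le⟩ ⟨hs₀pos.le, le_rfl⟩ hs₀pos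
    have e : G 0 = 0 := by simp [hG, becCgf]
    linarith
  obtain ⟨S, hSs₀, hS⟩ : ∃ S, s₀ ≤ S ∧ G S ≤ 0 := by
    refine ⟨max s₀ (-Real.log β / R'), le_max_left _ _, ?_⟩
    set S := max s₀ (-Real.log β / R')
    have h2 : -Real.log β ≤ S * R' := (div_le_iff₀ hR0).1 (le_max_right _ _)
    have h3 : Real.log β ≤ Real.log (β + (1 - β) * Real.exp (-S)) :=
      Real.log_le_log h0 (by nlinarith [mul_pos hb (Real.exp_pos (-S))])
    simp only [hG, becCgf]
    linarith
  obtain ⟨r, hr, hGr⟩ : ∃ r ∈ Set.Icc s₀ S, G r = 0 :=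
    intermediate_value_Icc' hSs₀ hcont.continuousOn ⟨hS, hGs₀.le⟩
  have hr₀ : s₀ < r := lt_of_le_of_ne hr.1 (by rintro rfl; linarith)
  have hroot : becCgf β r = r * R' := by simp only [hG] at hGr; linarith
  have hE := EaBec_le_becCgf h0 h1 hR0 hR1 hroot (becCgf_slope_lt h0 h1 hs₀ hr₀)
  have hE0 := EaBec_nonneg h0 h1 hR0 hR1
  have hrpos : 0 < becCgf β r := by rw [hroot]; exact mul_pos (hs₀pos.trans hr₀) hR0
  have htarget : (1 - ε) * EaBec β R' < becCgf β r := by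
    rcases hE0.eq_or_lt with h | h
    · rw [← h, mul_zero]
      exact hrpos
    · nlinarith [mul_pos hε h]
  have hev : ∀ᶠ s in nhdsWithin r (Set.Iio r), (1 - ε) * EaBec β R' < becCgf β s ∧ s₀ < s :=
    nhdsWithin_le_nhds <| (hcontC.continuousAt.eventually (lt_mem_nhds htarget)).and
      (lt_mem_nhds hr₀)
  obtain ⟨s, ⟨hs1, hs2⟩, hs3⟩ := (hev.and self_mem_nhdsWithin).exists
  refine ⟨s, hs₀pos.trans hs2, ?_, hs1⟩
  have h : G r < G s := hanti hs2.le hr.1 hs3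
  rw [hGr] at h
  simp only [hG] at h
  linarith

lemma becChannel_nonneg {β : ℝ} (h0 : 0 < β) (h1 : β < 1) (x : Bool) (y : Option Bool) :
    0 ≤ becChannel β x y := by
  unfold becChannel
  split_ifs <;> linarith

lemma eq_none_or_eq_some_of_becChannel_ne_zero {β : ℝ} {x : Bool} {y : Option Bool}
    (h : becChannel β x y ≠ 0) : y = none ∨ y = some x := by
  unfold becChannel at h
  by_contra! hc
  simp [hc.1, hc.2] at h

/-- The bits arriving by (0-indexed) time `t` at rate `R'`. -/
def arrivals (R' : ℝ) (t : ℕ) : ℕ := Nat.floor (R' * ((t : ℝ) + 1))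

/-- A bit undelivered at time `n` satisfies one of the Chernoff events, indexed by the last
time the queue was empty. -/
lemma one_le_sum_exp_of_delivered_lt {R' : ℝ} (hR0 : 0 < R') {s : ℝ} (hs : 0 < s)
    (ys : ℕ → Option Bool) {i n : ℕ} (h : delivered (arrivals R') ys n < i) :
    1 ≤ ∑ T ∈ Finset.range (Nat.ceil ((i : ℝ) / R')),
      Real.exp (s * (i - R' * T)) * Real.exp (-s * unerased ys T n) := by
  obtain ⟨T, -, hle⟩ := exists_add_unerased_le_delivered (arrivals R') ys n
  have hfl : R' * T < (if T = 0 then 0 else arrivals R' (T - 1) : ℕ) + 1 := by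
    cases T with
    | zero => simp
    | succ T => simpa [arrivals] using Nat.lt_floor_add_one (R' * ((T : ℝ) + 1))
  have hi : (((if T = 0 then 0 else arrivals R' (T - 1) : ℕ) : ℝ) + 1 + unerased ys T n) ≤ i := by
    exact_mod_cast (by omega)
  have hu : (0 : ℝ) ≤ unerased ys T n := Nat.cast_nonneg _
  have hT : T ∈ Finset.range (Nat.ceil ((i : ℝ) / R')) := by
    rw [Finset.mem_range, Nat.lt_ceil, lt_div_iff₀ hR0]
    linarith
  refine le_trans ?_ (Finset.single_le_sum
    (f := fun T : ℕ => Real.exp (s * (i - R' * T)) * Real.exp (-s * unerased ys T n))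
    (fun T _ => by positivity) hT)
  rw [← Real.exp_add, Real.one_le_exp_iff]
  nlinarith [mul_nonneg hs.le (by linarith : (0 : ℝ) ≤ i - R' * T - unerased ys T n)]

/-- The error probability given the message is at most a sum of Chernoff bounds. -/
lemma sum_error_le_sum_chernoff {β R' : ℝ} (h0 : 0 < β) (h1 : β < 1) (hR0 : 0 < R') {s : ℝ}
    (hs : 0 < s) (b : ℕ → Bool) {i : ℕ} (hi : 1 ≤ i) (n : ℕ) :
    ∑ y : Fin n → Option Bool,
      (∏ t : Fin n, becChannel β (queueEnc (arrivals R') t (extendY y) b) (y t)) *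
        (if queueDec (arrivals R') (i - 1) n (extendY y) = b (i - 1) then 0 else 1) ≤
    ∑ T ∈ Finset.range (Nat.ceil ((i : ℝ) / R')),
      Real.exp (s * (i - R' * T)) * (β + (1 - β) * Real.exp (-s)) ^ (n - T) := by
  have hmgf : ∀ T : ℕ, Real.exp (s * (i - R' * T)) * (β + (1 - β) * Real.exp (-s)) ^ (n - T) =
      ∑ y : Fin n → Option Bool,
        (∏ t : Fin n, becChannel β (queueEnc (arrivals R') t (extendY y) b) (y t)) *
        (Real.exp (s * (i - R' * T)) * Real.exp (-s * unerased (extendY y) T n)) := fun T => by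
    rw [← sum_becChannel_mul_exp_unerased β (fun t ys => queueEnc (arrivals R') t ys b)
      (fun t ys ys' h => queueEnc_congr _ h fun _ _ => rfl) s T n, Finset.mul_sum]
    exact Finset.sum_congr rfl fun y _ => by ring
  simp_rw [hmgf]
  rw [Finset.sum_comm]
  refine Finset.sum_le_sum fun y _ => ?_
  rw [← Finset.mul_sum]
  by_cases hz : ∏ t : Fin n, becChannel β (queueEnc (arrivals R') t (extendY y) b) (y t) = 0
  · simp [hz]
  refine mul_le_mul_of_nonneg_left ?_ (Finset.prod_nonneg fun t _ => becChannel_nonneg h0 h1 _ _)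
  split_ifs with hdec
  · exact Finset.sum_nonneg fun T _ => by positivity
  · refine one_le_sum_exp_of_delivered_lt hR0 hs _ ?_
    have hle := delivered_le_of_queueDec_ne (arrivals R') (extendY y) b (k := i - 1) (n := n)
      (fun t ht => by
        have hne := Finset.prod_ne_zero_iff.1 hz ⟨t, ht⟩ (Finset.mem_univ _)
        have he : extendY y t = y ⟨t, ht⟩ := by simp [extendY, ht]
        rw [he]
        exact eq_none_or_eq_some_of_becChannel_ne_zero hne) hdec
    omega

/-- The Chernoff bounds sum geometrically. -/
lemma sum_chernoff_le {β R' : ℝ} (h0 : 0 < β) (h1 : β < 1) (hR0 : 0 < R') {s : ℝ}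
    (hs : 0 < s) (hmargin : s * R' < becCgf β s) (i d : ℕ) :
    ∑ T ∈ Finset.range (Nat.ceil ((i : ℝ) / R')),
      Real.exp (s * (i - R' * T)) *
        (β + (1 - β) * Real.exp (-s)) ^ (Nat.ceil ((i : ℝ) / R') + d - T) ≤
    (1 - Real.exp (-(becCgf β s - s * R')))⁻¹ * Real.exp (-d * becCgf β s) := by
  set C := Nat.ceil ((i : ℝ) / R') with hC
  set a := becCgf β s with ha
  have hsR : 0 < s * R' := mul_pos hs hR0
  have hz : β + (1 - β) * Real.exp (-s) = Real.exp (-a) := by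
    rw [ha, becCgf, neg_neg, Real.exp_log (becMgf_pos h0 h1 s)]
  have hiC : (i : ℝ) ≤ R' * C := by
    rw [mul_comm, ← div_le_iff₀ hR0]
    exact Nat.le_ceil _
  set r := Real.exp (-(a - s * R')) with hr
  have hr1 : r < 1 := by
    rw [hr, Real.exp_lt_one_iff]
    linarith
  calc _ ≤ ∑ T ∈ Finset.range C, r ^ (C - 1 - T) * Real.exp (-d * a) := by
        refine Finset.sum_le_sum fun T hT => ?_
        have hT' := Finset.mem_range.1 hT
        rw [hz, hr, ← Real.exp_nat_mul, ← Real.exp_nat_mul, ← Real.exp_add, ← Real.exp_add,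
          Real.exp_le_exp, Nat.cast_sub (by omega), Nat.cast_sub (by omega),
          Nat.cast_sub (by omega)]
        push_cast
        nlinarith [mul_le_mul_of_nonneg_left hiC hs.le]
    _ = (∑ j ∈ Finset.range C, r ^ j) * Real.exp (-d * a) := by
        rw [← Finset.sum_mul, Finset.sum_range_reflect]
    _ ≤ _ := by
        refine mul_le_mul_of_nonneg_right ?_ (Real.exp_pos _).le
        rw [← tsum_geometric_of_lt_one (Real.exp_pos _).le hr1]
        exact (summable_geometric_of_lt_one (Real.exp_pos _).le hr1).sum_le_tsum _
          fun j _ => by positivity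

/-- **Theorem 3 (achievability for the BEC).**  Fix an erasure probability `β ∈ (0,1)`
and a rate `0 < R' < 1 - β` bits per channel use.  For every `ε > 0` there exists `d₀`
such that for every delay `d ≥ d₀` there exist a rate-`R` encoder with noiseless
feedback for `BEC(β)` and a delay-`d` decoder such that every (1-indexed) message bit
`i ≥ 1` satisfies `P(\hat B_i(⌈i/R'⌉ + d) ≠ B_i) ≤ exp(-d (1-ε) E_a^{bec}(R'))`. -/
theorem bec_fixed_delay_achievability
    (β R' : ℝ) (hβ0 : 0 < β) (hβ1 : β < 1) (hR'0 : 0 < R') (hR'1 : R' < 1 - β) :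
    ∀ ε : ℝ, 0 < ε → ∃ d0 : ℕ, ∀ d : ℕ, d0 ≤ d →
      ∃ (enc : ℕ → (ℕ → Option Bool) → (ℕ → Bool) → Bool)
        (dec : ∀ i : ℕ, (Fin (Nat.ceil ((i : ℝ) / R') + d) → Option Bool) → Bool),
        IsFeedbackEncoder R' enc ∧
        ∀ i : ℕ, 1 ≤ i →
          bitErrProbFb (becChannel β) enc (Nat.ceil ((i : ℝ) / R') + d)
            (max i (Nat.floor (R' * ((Nat.ceil ((i : ℝ) / R') + d : ℕ) : ℝ))))
            (dec i) i
          ≤ Real.exp (-(d : ℝ) * (1 - ε) * EaBec β R') := by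
  intro ε hε
  obtain ⟨s, hs, hmargin, htarget⟩ := exists_chernoff_parameter hβ0 hβ1 hR'0 hR'1 hε
  set K := (1 - Real.exp (-(becCgf β s - s * R')))⁻¹ with hK
  have hKpos : 0 < K := by
    rw [hK, inv_pos, sub_pos, Real.exp_lt_one_iff]
    linarith
  obtain ⟨d0, hd0⟩ := exists_nat_ge (Real.log K / (becCgf β s - (1 - ε) * EaBec β R'))
  rw [div_le_iff₀ (by linarith)] at hd0
  refine ⟨d0, fun d hd => ⟨queueEnc (arrivals R'),
    fun i y => queueDec (arrivals R') (i - 1) (Nat.ceil ((i : ℝ) / R') + d) (extendY y),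
    fun t ys ys' b b' hy hb => queueEnc_congr _ hy hb, fun i hi => ?_⟩⟩
  unfold bitErrProbFb
  have hd' : (d0 : ℝ) ≤ d := by exact_mod_cast hd
  have hfinal : K * Real.exp (-d * becCgf β s) ≤
      Real.exp (-(d : ℝ) * (1 - ε) * EaBec β R') := by
    rw [← Real.exp_log hKpos, ← Real.exp_add, Real.exp_le_exp]
    nlinarith [mul_le_mul_of_nonneg_right hd'
      (by linarith : (0 : ℝ) ≤ becCgf β s - (1 - ε) * EaBec β R')]
  refine le_trans (Finset.sum_le_card_nsmul _ _
    (((2 : ℝ) ^ (max i (Nat.floor (R' * ((Nat.ceil ((i : ℝ) / R') + d : ℕ) : ℝ)))))⁻¹ *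
      Real.exp (-(d : ℝ) * (1 - ε) * EaBec β R')) fun b _ => ?_) ?_
  · simp_rw [mul_assoc]
    rw [← Finset.mul_sum]
    refine mul_le_mul_of_nonneg_left ?_ (by positivity)
    rw [← mul_assoc (-(d : ℝ))]
    exact (sum_error_le_sum_chernoff hβ0 hβ1 hR'0 hs _ hi _).trans
      ((sum_chernoff_le hβ0 hβ1 hR'0 hs hmargin i d).trans hfinal)
  · rw [nsmul_eq_mul]
    simp [Finset.card_univ]

end
end

section
/- (Reliability-dependent capacity of the BEC, equation (becanytimecapacity).) Let beta in (0,1) and eta > 0. Define alpha = eta - log_2(1 + beta (2^eta - 1)) and R' = alpha/eta. Then alpha > 0, 2^alpha beta < 1, and R' = alpha / (alpha + log_2((1 - beta)/(1 - 2^alpha beta))); that is, eliminating the parameter eta from the parametric description (alpha, R') = (eta - log_2(1 + beta(2^eta - 1)), (eta - log_2(1 + beta(2^eta - 1)))/eta) yields R' = C'(alpha) with C'(alpha) = alpha / (alpha + log_2((1 - beta)/(1 - 2^alpha beta))). -/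
noncomputable section

/-- **Reliability-dependent capacity of the BEC.**  Let `β ∈ (0,1)` and `η > 0`.
With `α = η - log₂(1 + β(2^η - 1))` and `R' = α/η`, one has `α > 0`, `2^α β < 1`, and
`R' = α / (α + log₂((1-β)/(1 - 2^α β)))`; i.e. eliminating the parameter `η` from the
parametric description of the BEC uncertainty-focusing bound yields `R' = C'(α)` with
`C'(α) = α / (α + log₂((1-β)/(1-2^α β)))`. -/
theorem bec_reliability_capacity
    (β η α R' : ℝ) (hβ0 : 0 < β) (hβ1 : β < 1) (hη : 0 < η)
    (hα : α = η - Real.logb 2 (1 + β * ((2 : ℝ) ^ η - 1)))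
    (hR' : R' = α / η) :
    0 < α ∧ (2 : ℝ) ^ α * β < 1 ∧
      R' = α / (α + Real.logb 2 ((1 - β) / (1 - (2 : ℝ) ^ α * β))) := by
  have hx : 1 < (2 : ℝ) ^ η := Real.one_lt_rpow (by norm_num) hη
  have hD : 0 < 1 + β * ((2 : ℝ) ^ η - 1) := by nlinarith
  have hpow : (2 : ℝ) ^ α = 2 ^ η / (1 + β * ((2 : ℝ) ^ η - 1)) := by
    rw [hα, Real.rpow_sub (by norm_num), Real.rpow_logb (by norm_num) (by norm_num) hD]
  have hsub : 1 - (2 : ℝ) ^ α * β = (1 - β) / (1 + β * ((2 : ℝ) ^ η - 1)) := by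
    rw [hpow]
    field_simp
    ring
  have hβ : 0 < 1 - β := sub_pos.2 hβ1
  refine ⟨?_, ?_, ?_⟩
  · rw [hα, sub_pos, Real.logb_lt_iff_lt_rpow (by norm_num) hD]
    nlinarith
  · have := div_pos hβ hD
    linarith
  · rw [hsub, div_div_cancel₀ hβ.ne', hR']
    congr 1
    linarith

end
end

section
/- (Lemma 3, window dependence of feedforward decoders.) Let P be a DMC, R > 0 with R' = R/ln 2 < 1, and let E be a rate-R encoder without feedback. Fix a bit index i and delay d, and let D_i : {0,1}^{i-1} x Y^{ceil(i/R')+d} -> {0,1} be any delay-d decoder with feedforward for bit i. Then there exists a decoder D^f_i : {0,1}^{i-1} x Y^{d+1} -> {0,1} depending only on the past message bits B_1^{i-1} and the recent channel outputs Y_{ceil(i/R')}^{ceil(i/R')+d}, such that P(B_i != D^f_i(B_1^{i-1}, Y_{ceil(i/R')}^{ceil(i/R')+d})) <= P(B_i != D_i(B_1^{i-1}, Y_1^{ceil(i/R')+d})), where the message bits are i.i.d. fair coin flips. -/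
open scoped BigOperators

noncomputable section

/-- `P` is a stochastic matrix (a DMC). -/
def IsStochastic {X Y : Type} [Fintype X] [Fintype Y] (P : X → Y → ℝ) : Prop :=
  ∀ x, (∀ y, 0 ≤ P x y) ∧ ∑ y, P x y = 1

/-- A rate-`R` encoder without feedback: the channel input at the (1-indexed) time
`t+1` may depend only on the first `⌊R'·(t+1)⌋` message bits. -/
def IsNoFeedbackEncoder {X : Type} (R' : ℝ) (enc : ℕ → (ℕ → Bool) → X) : Prop :=
  ∀ t : ℕ, ∀ b b' : ℕ → Bool,
    (∀ k, k < Nat.floor (R' * ((t : ℝ) + 1)) → b k = b' k) → enc t b = enc t b'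

/-- The probability that a feedforward decoder `dec` (which sees the past message bits
in addition to the channel outputs) errs on the (1-indexed) message bit `i`, computed
under the explicit finite product law `P(b,y) = 2^{-M} ∏_t p_{y_t | enc_t(b)}` on `M`
i.i.d. fair message bits and `n` channel outputs. -/
def ffBitErrProb {X Y : Type} [Fintype X] [Fintype Y] (P : X → Y → ℝ)
    (enc : ℕ → (ℕ → Bool) → X) (n M i : ℕ)
    (dec : (ℕ → Bool) → (Fin n → Y) → Bool) : ℝ :=
  ∑ b : Fin M → Bool, ∑ y : Fin n → Y,
    ((2 : ℝ) ^ M)⁻¹ * (∏ t : Fin n, P (enc t (extendB b)) (y t)) *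
      (if dec (extendB b) y = extendB b (i - 1) then 0 else 1)

/-- Replacing a weighted average over `z` by a single best choice of `z` for each value of `key`
does not increase the total. -/
theorem exists_selection_sum_le {β κ Z : Type*} [Fintype β] [Fintype Z] [Nonempty Z]
    (key : β → κ) (W : κ → Z → ℝ) (hW : ∀ k z, 0 ≤ W k z) (hW1 : ∀ k, ∑ z, W k z = 1)
    (f : β → Z → ℝ) :
    ∃ z : κ → Z, ∑ b, f b (z (key b)) ≤ ∑ b, ∑ z, W (key b) z * f b z := by
  classical
  have hmin : ∀ k, ∃ z₀, ∀ z, ∑ b with key b = k, f b z₀ ≤ ∑ b with key b = k, f b z :=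
    fun k => Finite.exists_min _
  choose z₀ hz₀ using hmin
  refine ⟨z₀, ?_⟩
  have hmaps : ∀ b ∈ (Finset.univ : Finset β), key b ∈ Finset.univ.image key :=
    fun b hb => Finset.mem_image_of_mem key hb
  rw [← Finset.sum_fiberwise_of_maps_to hmaps, ← Finset.sum_fiberwise_of_maps_to hmaps]
  refine Finset.sum_le_sum fun k _ => ?_
  calc ∑ b with key b = k, f b (z₀ (key b))
      = ∑ b with key b = k, f b (z₀ k) :=
        Finset.sum_congr rfl fun b hb => by rw [(Finset.mem_filter.mp hb).2]
    _ = ∑ z, W k z * ∑ b with key b = k, f b (z₀ k) := by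
        rw [← Finset.sum_mul, hW1, one_mul]
    _ ≤ ∑ z, W k z * ∑ b with key b = k, f b z :=
        Finset.sum_le_sum fun z _ => mul_le_mul_of_nonneg_left (hz₀ k z) (hW k z)
    _ = ∑ b with key b = k, ∑ z, W (key b) z * f b z := by
        simp_rw [Finset.mul_sum]
        rw [Finset.sum_comm]
        exact Finset.sum_congr rfl fun b hb => by rw [(Finset.mem_filter.mp hb).2]

/-- The product law of a stochastic matrix along fixed inputs has total mass one. -/
theorem IsStochastic.sum_prod_eq_one {X Y ι : Type} [Fintype X] [Fintype Y] [Fintype ι]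
    [DecidableEq ι] {P : X → Y → ℝ} (hP : IsStochastic P) (x : ι → X) :
    ∑ y : ι → Y, ∏ t, P (x t) (y t) = 1 := by
  have h := Finset.prod_univ_sum (fun _ : ι => (Finset.univ : Finset Y)) fun t y => P (x t) y
  rw [Fintype.piFinset_univ] at h
  rw [← h]
  exact Finset.prod_eq_one fun t _ => (hP (x t)).2

/-- The first `m` bits of `b`, followed by `false`s. -/
def bitPrefix (m : ℕ) (b : ℕ → Bool) : ℕ → Bool := fun k => if k < m then b k else false

theorem bitPrefix_congr {m : ℕ} {b b' : ℕ → Bool} (h : ∀ k, k < m → b k = b' k) :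
    bitPrefix m b = bitPrefix m b' := by
  funext k
  by_cases hk : k < m <;> simp [bitPrefix, hk, h]

/-- Splitting an output string into its coordinates before time `s` and from time `s` on. -/
def splitOutputs (Y : Type) (n s : ℕ) :
    (Fin n → Y) ≃ ({t : Fin n // (t : ℕ) < s} → Y) × ({t : Fin n // ¬(t : ℕ) < s} → Y) :=
  Equiv.piEquivPiSubtypeProd (fun t : Fin n => (t : ℕ) < s) fun _ => Y

/-- The error contribution of the message `b` when the outputs before time `s` equal `z`. -/
def windowErr {X Y : Type} [Fintype X] [Fintype Y] (P : X → Y → ℝ)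
    (enc : ℕ → (ℕ → Bool) → X) (n M i s : ℕ) (dec : (ℕ → Bool) → (Fin n → Y) → Bool)
    (b : Fin M → Bool) (z : {t : Fin n // (t : ℕ) < s} → Y) : ℝ :=
  ∑ w : {t : Fin n // ¬(t : ℕ) < s} → Y,
    ((2 : ℝ) ^ M)⁻¹ * (∏ t, P (enc t.1 (extendB b)) (w t)) *
      (if dec (extendB b) ((splitOutputs Y n s).symm (z, w)) = extendB b (i - 1) then 0 else 1)

theorem ffBitErrProb_eq_sum_windowErr {X Y : Type} [Fintype X] [Fintype Y] (P : X → Y → ℝ)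
    (enc : ℕ → (ℕ → Bool) → X) (n M i s : ℕ) (dec : (ℕ → Bool) → (Fin n → Y) → Bool) :
    ffBitErrProb P enc n M i dec =
      ∑ b : Fin M → Bool, ∑ z : {t : Fin n // (t : ℕ) < s} → Y,
        (∏ t, P (enc t.1 (extendB b)) (z t)) * windowErr P enc n M i s dec b z := by
  unfold ffBitErrProb windowErr
  refine Finset.sum_congr rfl fun b _ => ?_
  rw [← (splitOutputs Y n s).symm.sum_comp, Fintype.sum_prod_type]
  refine Finset.sum_congr rfl fun z _ => ?_
  rw [Finset.mul_sum]
  refine Finset.sum_congr rfl fun w _ => ?_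
  have hprod : ∏ t : Fin n, P (enc t (extendB b)) ((splitOutputs Y n s).symm (z, w) t) =
      (∏ t : {t : Fin n // (t : ℕ) < s}, P (enc t.1 (extendB b)) (z t)) *
        ∏ t : {t : Fin n // ¬(t : ℕ) < s}, P (enc t.1 (extendB b)) (w t) := by
    rw [← Fintype.prod_subtype_mul_prod_subtype fun t : Fin n => (t : ℕ) < s]
    congr 1
    · refine Finset.prod_congr rfl fun t _ => ?_
      have ht := t.2
      simp [splitOutputs, Equiv.piEquivPiSubtypeProd, ht]
    · refine Finset.prod_congr rfl fun t _ => ?_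
      have ht := t.2
      simp only [splitOutputs, Equiv.piEquivPiSubtypeProd, Equiv.coe_fn_symm_mk, dif_neg ht]
  rw [hprod]
  ring

/-- If the inputs before time `s` are determined by the first `i - 1` bits, a feedforward decoder
for bit `i` can be made to ignore the outputs before time `s` without increasing its error. -/
theorem exists_window_decoder {X Y : Type} [Fintype X] [Fintype Y] [Nonempty Y]
    {P : X → Y → ℝ} (hP : IsStochastic P) (enc : ℕ → (ℕ → Bool) → X) (n M i s : ℕ)
    (henc : ∀ t, t < s → ∀ b b' : ℕ → Bool, (∀ k, k < i - 1 → b k = b' k) → enc t b = enc t b')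
    (dec : (ℕ → Bool) → (Fin n → Y) → Bool)
    (hdec : ∀ b b' y, (∀ k, k < i - 1 → b k = b' k) → dec b y = dec b' y) :
    ∃ Df : (ℕ → Bool) → (Fin n → Y) → Bool,
      (∀ b b' y, (∀ k, k < i - 1 → b k = b' k) → Df b y = Df b' y) ∧
      (∀ b y y', (∀ t : Fin n, s ≤ (t : ℕ) → y t = y' t) → Df b y = Df b y') ∧
      ffBitErrProb P enc n M i Df ≤ ffBitErrProb P enc n M i dec := by
  obtain ⟨z₀, hz₀⟩ := exists_selection_sum_le
    (fun b : Fin M → Bool => bitPrefix (i - 1) (extendB b))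
    (fun k (z : {t : Fin n // (t : ℕ) < s} → Y) => ∏ t, P (enc t.1 k) (z t))
    (fun k z => Finset.prod_nonneg fun t _ => (hP _).1 _)
    (fun k => hP.sum_prod_eq_one _)
    (windowErr P enc n M i s dec)
  have hpre : ∀ (b : ℕ → Bool) (t : {t : Fin n // (t : ℕ) < s}),
      enc t.1 (bitPrefix (i - 1) b) = enc t.1 b :=
    fun b t => henc _ t.2 _ _ fun k hk => if_pos hk
  simp only [hpre] at hz₀
  refine ⟨fun b y => dec b ((splitOutputs Y n s).symm
    (z₀ (bitPrefix (i - 1) b), (splitOutputs Y n s y).2)), ?_, ?_, ?_⟩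
  · intro b b' y h
    simp only [bitPrefix_congr h]
    exact hdec _ _ _ h
  · intro b y y' h
    have hw : (splitOutputs Y n s y).2 = (splitOutputs Y n s y').2 :=
      funext fun t => h t.1 (not_lt.mp t.2)
    simp only [hw]
  · rw [ffBitErrProb_eq_sum_windowErr P enc n M i s,
      ffBitErrProb_eq_sum_windowErr P enc n M i s dec]
    refine le_trans (le_of_eq ?_) hz₀
    refine Finset.sum_congr rfl fun b _ => ?_
    simp only [windowErr, Equiv.apply_symm_apply]
    rw [← Finset.sum_mul, hP.sum_prod_eq_one, one_mul]

/-- **Lemma 3 (window dependence of feedforward decoders).**  Let `P` be a DMC, `R > 0`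
with bit rate `R' = R/ln 2 < 1`, and `enc` a rate-`R` encoder without feedback.  Fix a
bit index `i ≥ 1` and delay `d`, and let `dec` be any delay-`d` feedforward decoder for
bit `i` (it depends only on the past message bits `B_1^{i-1}` and all the channel
outputs `Y_1^{⌈i/R'⌉+d}`).  Then there is a feedforward decoder `Df` depending only on
`B_1^{i-1}` and the recent window `Y_{⌈i/R'⌉}^{⌈i/R'⌉+d}` of channel outputs whose
probability of error on bit `i` is no larger, the message bits being i.i.d. fair coins. -/
theorem feedforward_window_dependence
    {X Y : Type} [Fintype X] [Fintype Y] [Nonempty X] [Nonempty Y]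
    (P : X → Y → ℝ) (hP : IsStochastic P)
    (R : ℝ) (hR : 0 < R) (hR' : R / Real.log 2 < 1)
    (enc : ℕ → (ℕ → Bool) → X) (henc : IsNoFeedbackEncoder (R / Real.log 2) enc)
    (i d : ℕ) (hi : 1 ≤ i)
    (dec : (ℕ → Bool) → (Fin (Nat.ceil ((i : ℝ) / (R / Real.log 2)) + d) → Y) → Bool)
    (hdec : ∀ b b' y, (∀ k, k < i - 1 → b k = b' k) → dec b y = dec b' y) :
    ∃ Df : (ℕ → Bool) → (Fin (Nat.ceil ((i : ℝ) / (R / Real.log 2)) + d) → Y) → Bool,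
      (∀ b b' y, (∀ k, k < i - 1 → b k = b' k) → Df b y = Df b' y) ∧
      (∀ b y y',
        (∀ t : Fin (Nat.ceil ((i : ℝ) / (R / Real.log 2)) + d),
          Nat.ceil ((i : ℝ) / (R / Real.log 2)) - 1 ≤ (t : ℕ) → y t = y' t) →
        Df b y = Df b y') ∧
      ffBitErrProb P enc (Nat.ceil ((i : ℝ) / (R / Real.log 2)) + d)
          (max i (Nat.floor ((R / Real.log 2) *
            ((Nat.ceil ((i : ℝ) / (R / Real.log 2)) + d : ℕ) : ℝ)))) i Df
        ≤ ffBitErrProb P enc (Nat.ceil ((i : ℝ) / (R / Real.log 2)) + d)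
          (max i (Nat.floor ((R / Real.log 2) *
            ((Nat.ceil ((i : ℝ) / (R / Real.log 2)) + d : ℕ) : ℝ)))) i dec := by
  have hr : 0 < R / Real.log 2 := div_pos hR (Real.log_pos one_lt_two)
  refine exists_window_decoder hP enc _ _ i _ (fun t ht b b' h => ?_) dec hdec
  refine henc t b b' fun k hk => h k (hk.trans_le ?_)
  have hlt : ((t + 1 : ℕ) : ℝ) < (i : ℝ) / (R / Real.log 2) := Nat.lt_ceil.mp (by omega)
  rw [lt_div_iff₀ hr] at hlt
  push_cast at hlt
  have hfl : Nat.floor (R / Real.log 2 * ((t : ℝ) + 1)) < i :=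
    (Nat.floor_lt (by positivity)).mpr (by rw [mul_comm]; exact hlt)
  omega

end
end

section
/- (Lemma 5, data-processing inequality for error signals.) Let B, X, Y, tilde B be random variables taking values in finite sets, with B uniformly distributed on {0,1}^m. Suppose: (i) tilde B is a deterministic function of (B, Y); (ii) B is a deterministic function of (tilde B, Y); and (iii) B - X - Y is a Markov chain. Then H(tilde B) >= m ln 2 - I(X; Y), where H denotes Shannon entropy and I mutual information, both in nats. -/
open scoped BigOperators

noncomputable section

/-- The probability mass function of a random variable `V` on a finite sample space
carrying the pmf `μ`. -/
def pmfOf {Ω A : Type} [Fintype Ω] [DecidableEq A] (μ : Ω → ℝ) (V : Ω → A) (a : A) : ℝ :=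
  ∑ ω, if V ω = a then μ ω else 0

/-- Shannon entropy (in nats) of a random variable on a finite sample space. -/
def entropy {Ω A : Type} [Fintype Ω] [Fintype A] [DecidableEq A]
    (μ : Ω → ℝ) (V : Ω → A) : ℝ :=
  ∑ a, -(pmfOf μ V a * Real.log (pmfOf μ V a))

/-- Mutual information (in nats) between two random variables on a finite sample
space. -/
def mutualInfoRV {Ω A B : Type} [Fintype Ω] [Fintype A] [Fintype B]
    [DecidableEq A] [DecidableEq B] (μ : Ω → ℝ) (U : Ω → A) (V : Ω → B) : ℝ :=
  entropy μ U + entropy μ V - entropy μ (fun ω => (U ω, V ω))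

section FiniteEntropy

variable {Ω A C D : Type} [Fintype Ω] [DecidableEq A] [DecidableEq C] [DecidableEq D]

theorem pmfOf_nonneg {μ : Ω → ℝ} (hμ : ∀ ω, 0 ≤ μ ω) (V : Ω → A) (a : A) : 0 ≤ pmfOf μ V a :=
  Finset.sum_nonneg fun ω _ => by split_ifs <;> simp [hμ ω]

theorem pmfOf_self_pos {μ : Ω → ℝ} (hμ : ∀ ω, 0 ≤ μ ω) (V : Ω → A) {ω : Ω} (h : 0 < μ ω) :
    0 < pmfOf μ V (V ω) := by
  refine h.trans_le ?_
  have := Finset.single_le_sum (f := fun ω' => if V ω' = V ω then μ ω' else 0)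
    (fun ω' _ => by split_ifs <;> simp [hμ ω']) (Finset.mem_univ ω)
  simpa [pmfOf] using this

theorem sum_mul_comp_eq_sum_pmfOf [Fintype A] (μ : Ω → ℝ) (V : Ω → A) (F : A → ℝ) :
    ∑ ω, μ ω * F (V ω) = ∑ a, pmfOf μ V a * F a := by
  simp only [pmfOf, Finset.sum_mul]
  rw [Finset.sum_comm]
  simp [ite_mul]

theorem sum_pmfOf [Fintype A] (μ : Ω → ℝ) (V : Ω → A) : ∑ a, pmfOf μ V a = ∑ ω, μ ω := by
  simpa using (sum_mul_comp_eq_sum_pmfOf μ V fun _ => 1).symm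

theorem sum_pmfOf_prodMk [Fintype C] (μ : Ω → ℝ) (U : Ω → A) (V : Ω → C) (a : A) :
    ∑ c, pmfOf μ (fun ω => (U ω, V ω)) (a, c) = pmfOf μ U a := by
  simp only [pmfOf, Prod.mk.injEq]
  rw [Finset.sum_comm]
  refine Finset.sum_congr rfl fun ω _ => ?_
  by_cases h : U ω = a <;> simp [h]

theorem entropy_eq_neg_sum [Fintype A] (μ : Ω → ℝ) (V : Ω → A) :
    entropy μ V = -∑ ω, μ ω * Real.log (pmfOf μ V (V ω)) := by
  rw [sum_mul_comp_eq_sum_pmfOf μ V fun a => Real.log (pmfOf μ V a)]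
  simp [entropy]

/-- Random variables that determine each other have the same entropy. -/
theorem entropy_congr [Fintype A] [Fintype C] (μ : Ω → ℝ) {V : Ω → A} {W : Ω → C}
    (h : ∀ ω ω', V ω = V ω' ↔ W ω = W ω') : entropy μ V = entropy μ W := by
  simp only [entropy_eq_neg_sum, pmfOf, h]

/-- Submodularity of entropy: conditional mutual information is nonnegative. -/
theorem entropy_submodular [Fintype A] [Fintype C] [Fintype D] {μ : Ω → ℝ}
    (hμ : ∀ ω, 0 ≤ μ ω) (U : Ω → A) (V : Ω → C) (W : Ω → D) :
    entropy μ U + entropy μ (fun ω => (U ω, V ω, W ω)) ≤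
      entropy μ (fun ω => (U ω, V ω)) + entropy μ (fun ω => (U ω, W ω)) := by
  set p := pmfOf μ U
  set q := pmfOf μ fun ω => (U ω, V ω)
  set r := pmfOf μ fun ω => (U ω, W ω)
  set s := pmfOf μ fun ω => (U ω, V ω, W ω)
  let F : A × C × D → ℝ := fun t => q (t.1, t.2.1) * r (t.1, t.2.2) / (p t.1 * s t)
  have hlog : ∀ ω, μ ω * Real.log (q (U ω, V ω)) + μ ω * Real.log (r (U ω, W ω)) -
      μ ω * Real.log (p (U ω)) - μ ω * Real.log (s (U ω, V ω, W ω)) ≤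
      μ ω * F (U ω, V ω, W ω) - μ ω := by
    intro ω
    rcases (hμ ω).eq_or_lt with h | h
    · simp [← h]
    have hp : 0 < p (U ω) := pmfOf_self_pos hμ U h
    have hq : 0 < q (U ω, V ω) := pmfOf_self_pos hμ (fun ω => (U ω, V ω)) h
    have hr : 0 < r (U ω, W ω) := pmfOf_self_pos hμ (fun ω => (U ω, W ω)) h
    have hs : 0 < s (U ω, V ω, W ω) := pmfOf_self_pos hμ (fun ω => (U ω, V ω, W ω)) h
    have hF : 0 < F (U ω, V ω, W ω) := by simp only [F]; positivity
    have hle := mul_le_mul_of_nonneg_left (Real.log_le_sub_one_of_pos hF) h.le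
    simp only [F] at hle ⊢
    rw [Real.log_div (by positivity) (by positivity), Real.log_mul hq.ne' hr.ne',
      Real.log_mul hp.ne' hs.ne'] at hle
    linarith
  have hF : ∑ ω, μ ω * F (U ω, V ω, W ω) ≤ ∑ ω, μ ω := by
    rw [sum_mul_comp_eq_sum_pmfOf μ (fun ω => (U ω, V ω, W ω)) F]
    calc ∑ t, s t * F t
        ≤ ∑ t : A × C × D, q (t.1, t.2.1) * r (t.1, t.2.2) / p t.1 := by
          refine Finset.sum_le_sum fun t _ => ?_
          have hp : 0 ≤ p t.1 := pmfOf_nonneg hμ _ _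
          have hq : 0 ≤ q (t.1, t.2.1) := pmfOf_nonneg hμ _ _
          have hr : 0 ≤ r (t.1, t.2.2) := pmfOf_nonneg hμ _ _
          by_cases hs : s t = 0
          · rw [hs, zero_mul]
            positivity
          · refine le_of_eq ?_
            simp only [F]
            rw [mul_comm (p t.1), ← div_div, mul_div_assoc', mul_div_assoc',
              mul_div_cancel_left₀ _ hs]
      _ = ∑ a, (∑ c, q (a, c)) * (∑ d, r (a, d)) / p a := by
          simp only [Fintype.sum_prod_type, Finset.sum_mul_sum, Finset.sum_div]
      _ = ∑ a, p a := by
          refine Finset.sum_congr rfl fun a _ => ?_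
          rw [sum_pmfOf_prodMk, sum_pmfOf_prodMk]
          exact mul_self_div_self _
      _ = ∑ ω, μ ω := sum_pmfOf μ U
  have hsum := Finset.sum_le_sum fun ω (_ : ω ∈ Finset.univ) => hlog ω
  simp only [Finset.sum_sub_distrib, Finset.sum_add_distrib] at hsum
  simp only [entropy_eq_neg_sum]
  linarith

/-- Subadditivity of entropy. -/
theorem entropy_prodMk_le [Fintype A] [Fintype C] {μ : Ω → ℝ} (hμ : ∀ ω, 0 ≤ μ ω)
    (hμ1 : ∑ ω, μ ω = 1) (V : Ω → A) (W : Ω → C) :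
    entropy μ (fun ω => (V ω, W ω)) ≤ entropy μ V + entropy μ W := by
  have h := entropy_submodular hμ (fun _ => ()) V W
  have h0 : entropy μ (fun _ : Ω => ()) = 0 := by simp [entropy, pmfOf, hμ1]
  rw [h0, zero_add, entropy_congr μ (W := fun ω => (V ω, W ω)) (by simp),
    entropy_congr μ (V := fun ω => ((), V ω)) (W := V) (by simp),
    entropy_congr μ (V := fun ω => ((), W ω)) (W := W) (by simp)] at h
  exact h

/-- A Markov chain `U - V - W` attains equality in submodularity conditioned on `V`. -/
theorem entropy_add_eq_of_markov [Fintype A] [Fintype C] [Fintype D] {μ : Ω → ℝ}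
    (hμ : ∀ ω, 0 ≤ μ ω) (U : Ω → A) (V : Ω → C) (W : Ω → D)
    (h : ∀ u v w, pmfOf μ (fun ω => (U ω, V ω, W ω)) (u, v, w) * pmfOf μ V v =
      pmfOf μ (fun ω => (U ω, V ω)) (u, v) * pmfOf μ (fun ω => (V ω, W ω)) (v, w)) :
    entropy μ (fun ω => (U ω, V ω, W ω)) + entropy μ V =
      entropy μ (fun ω => (U ω, V ω)) + entropy μ (fun ω => (V ω, W ω)) := by
  simp only [entropy_eq_neg_sum, ← neg_add, ← Finset.sum_add_distrib]
  refine congrArg _ (Finset.sum_congr rfl fun ω _ => ?_)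
  rcases (hμ ω).eq_or_lt with hω | hω
  · simp [← hω]
  rw [← mul_add, ← mul_add,
    ← Real.log_mul (pmfOf_self_pos hμ (fun ω => (U ω, V ω, W ω)) hω).ne'
      (pmfOf_self_pos hμ V hω).ne',
    ← Real.log_mul (pmfOf_self_pos hμ (fun ω => (U ω, V ω)) hω).ne'
      (pmfOf_self_pos hμ (fun ω => (V ω, W ω)) hω).ne', h]

end FiniteEntropy

/-- **Lemma 5 (data-processing inequality for error signals).**  Let `B, X, Y, B̃` be
random variables on a finite probability space, with `B` uniform on `{0,1}^m`.  If
(i) `B̃` is a deterministic function of `(B,Y)`, (ii) `B` is a deterministic function of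
`(B̃,Y)`, and (iii) `B - X - Y` is a Markov chain, then
`H(B̃) ≥ m ln 2 - I(X;Y)` (entropies and informations in nats). -/
theorem error_signal_data_processing
    {Ω XT YT TT : Type} [Fintype Ω] [Fintype XT] [Fintype YT] [Fintype TT]
    [DecidableEq XT] [DecidableEq YT] [DecidableEq TT]
    (μ : Ω → ℝ) (hμ0 : ∀ ω, 0 ≤ μ ω) (hμ1 : ∑ ω, μ ω = 1)
    (m : ℕ) (B : Ω → (Fin m → Bool)) (Xv : Ω → XT) (Yv : Ω → YT) (Bt : Ω → TT)
    (hBunif : ∀ v : Fin m → Bool, pmfOf μ B v = ((2 : ℝ) ^ m)⁻¹)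
    (hfun1 : ∃ f : (Fin m → Bool) × YT → TT, ∀ ω, Bt ω = f (B ω, Yv ω))
    (hfun2 : ∃ g : TT × YT → (Fin m → Bool), ∀ ω, B ω = g (Bt ω, Yv ω))
    (hmarkov : ∀ (v : Fin m → Bool) (x : XT) (y : YT),
      pmfOf μ (fun ω => (B ω, Xv ω, Yv ω)) (v, x, y) * pmfOf μ Xv x
        = pmfOf μ (fun ω => (B ω, Xv ω)) (v, x) * pmfOf μ (fun ω => (Xv ω, Yv ω)) (x, y)) :
    (m : ℝ) * Real.log 2 - mutualInfoRV μ Xv Yv ≤ entropy μ Bt := by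
  obtain ⟨f, hf⟩ := hfun1
  obtain ⟨g, hg⟩ := hfun2
  have hB : entropy μ B = m * Real.log 2 := by
    simp [entropy, hBunif]
  have hBtY : entropy μ (fun ω => (Bt ω, Yv ω)) = entropy μ (fun ω => (B ω, Yv ω)) := by
    refine entropy_congr μ fun ω ω' => ?_
    simp only [Prod.mk.injEq]
    constructor
    · rintro ⟨hT, hY⟩
      exact ⟨by rw [hg ω, hg ω', hT, hY], hY⟩
    · rintro ⟨hv, hY⟩
      exact ⟨by rw [hf ω, hf ω', hv, hY], hY⟩
  have hsub := entropy_prodMk_le hμ0 hμ1 Bt Yv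
  have hsubmod := entropy_submodular hμ0 B Xv Yv
  have hchain := entropy_add_eq_of_markov hμ0 B Xv Yv hmarkov
  rw [mutualInfoRV, ← hB]
  linarith

end
end

section
/- (Lemma 6, change of measure.) Let X, Y be finite alphabets and let G = (g_{y|x}) and P = (p_{y|x}) be stochastic matrices with the property that g_{y|x} > 0 implies p_{y|x} > 0. For a string x in X^d, let P_G(.|x) and P_P(.|x) denote the product conditional laws on Y^d (P_G(y|x) = prod_t g_{y_t|x_t}, and similarly for P), and let r(x) be the empirical distribution (type) of x. Then for every delta > 0 and epsilon > 0 there exists d_0 = d_0(epsilon, delta, G, P) such that for all d > d_0, all x in X^d, and all events A subset of Y^d: if P_G(A | x) >= delta, then P_P(A | x) >= (delta/2) exp(-d (D(G||P | r(x)) + epsilon)), where D(G||P|r) = sum_x r_x sum_y g_{y|x} ln(g_{y|x}/p_{y|x}). -/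
open scoped BigOperators

noncomputable section

/-- The empirical distribution (type) of a string `x ∈ X^d`. -/
def empDist {X : Type} [Fintype X] [DecidableEq X] {d : ℕ} (x : Fin d → X) : X → ℝ :=
  fun a => ((Finset.univ.filter fun t => x t = a).card : ℝ) / d

/-- The conditional divergence `D(G‖P|r) = ∑_x r_x ∑_y g_{y|x} ln(g_{y|x}/p_{y|x})`. -/
def condDiv {X Y : Type} [Fintype X] [Fintype Y] (G P : X → Y → ℝ) (r : X → ℝ) : ℝ :=
  ∑ x, r x * ∑ y, G x y * Real.log (G x y / P x y)

/-- The single-letter log-likelihood ratio, centred at its mean under `G x`. -/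
def centredLogRatio {X Y : Type} [Fintype Y] (G P : X → Y → ℝ) (x : X) (y : Y) : ℝ :=
  Real.log (G x y / P x y) - ∑ b, G x b * Real.log (G x b / P x b)

lemma sum_mul_centredLogRatio {X Y : Type} [Fintype X] [Fintype Y] {G : X → Y → ℝ}
    (hG : IsStochastic G) (P : X → Y → ℝ) (x : X) :
    ∑ y, G x y * centredLogRatio G P x y = 0 := by
  simp only [centredLogRatio, mul_sub, Finset.sum_sub_distrib, ← Finset.sum_mul, (hG x).2]
  ring

/-- The divergence conditioned on the type of a string is the average of the single-letter
divergences along the string. -/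
lemma card_mul_condDiv_empDist {X Y : Type} [Fintype X] [Fintype Y] [DecidableEq X]
    (G P : X → Y → ℝ) {d : ℕ} (hd : 0 < d) (x : Fin d → X) :
    (d : ℝ) * condDiv G P (empDist x)
      = ∑ t, ∑ y, G (x t) y * Real.log (G (x t) y / P (x t) y) := by
  have hd' : (d : ℝ) ≠ 0 := by positivity
  rw [← Finset.sum_fiberwise Finset.univ x, condDiv, Finset.mul_sum]
  refine Finset.sum_congr rfl fun a _ => ?_
  have hfib : ∀ t ∈ Finset.univ.filter (fun t => x t = a),
      ∑ y, G (x t) y * Real.log (G (x t) y / P (x t) y)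
        = ∑ y, G a y * Real.log (G a y / P a y) := fun t ht => by
    rw [(Finset.mem_filter.mp ht).2]
  rw [Finset.sum_congr rfl hfib, Finset.sum_const, nsmul_eq_mul, empDist]
  field_simp

/-- A bounded centred function of a finitely supported law has a sub-Gaussian moment generating
function near the origin. -/
lemma sum_mul_exp_le {Y : Type} [Fintype Y] {g f : Y → ℝ} (hg : ∀ y, 0 ≤ g y)
    (hsum : ∑ y, g y = 1) (hmean : ∑ y, g y * f y = 0) {M l : ℝ}
    (hf : ∀ y, |f y| ≤ M) (hl : 0 ≤ l) (hlM : l * M ≤ 1) :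
    ∑ y, g y * Real.exp (l * f y) ≤ Real.exp ((l * M) ^ 2) := by
  have hpt (y : Y) : Real.exp (l * f y) ≤ 1 + l * f y + (l * M) ^ 2 := by
    have habs : |l * f y| ≤ l * M := by
      rw [abs_mul, abs_of_nonneg hl]
      exact mul_le_mul_of_nonneg_left (hf y) hl
    have hexp := (abs_le.mp (Real.abs_exp_sub_one_sub_id_le (habs.trans hlM))).2
    have hsq : (l * f y) ^ 2 ≤ (l * M) ^ 2 := sq_le_sq' (abs_le.mp habs).1 (abs_le.mp habs).2
    linarith
  calc ∑ y, g y * Real.exp (l * f y)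
      ≤ ∑ y, g y * (1 + l * f y + (l * M) ^ 2) :=
        Finset.sum_le_sum fun y _ => mul_le_mul_of_nonneg_left (hpt y) (hg y)
    _ = (∑ y, g y) + l * (∑ y, g y * f y) + (l * M) ^ 2 * ∑ y, g y := by
        simp only [Finset.mul_sum, ← Finset.sum_add_distrib]
        exact Finset.sum_congr rfl fun y _ => by ring
    _ = (l * M) ^ 2 + 1 := by rw [hsum, hmean]; ring
    _ ≤ Real.exp ((l * M) ^ 2) := Real.add_one_le_exp _

/-- The moment generating function bound for a sum of independent centred bounded functions. -/
lemma sum_prod_mul_exp_sum_le {Y : Type} [Fintype Y] {d : ℕ} {g f : Fin d → Y → ℝ}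
    (hg : ∀ t y, 0 ≤ g t y) (hsum : ∀ t, ∑ y, g t y = 1) (hmean : ∀ t, ∑ y, g t y * f t y = 0)
    {M l : ℝ} (hf : ∀ t y, |f t y| ≤ M) (hl : 0 ≤ l) (hlM : l * M ≤ 1) :
    ∑ y : Fin d → Y, (∏ t, g t (y t)) * Real.exp (l * ∑ t, f t (y t))
      ≤ Real.exp (d * (l * M) ^ 2) := by
  calc ∑ y : Fin d → Y, (∏ t, g t (y t)) * Real.exp (l * ∑ t, f t (y t))
      = ∑ y : Fin d → Y, ∏ t, g t (y t) * Real.exp (l * f t (y t)) := by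
        refine Finset.sum_congr rfl fun y _ => ?_
        rw [Finset.mul_sum, Real.exp_sum, Finset.prod_mul_distrib]
    _ = ∏ t, ∑ b, g t b * Real.exp (l * f t b) :=
        (Fintype.prod_sum fun t b => g t b * Real.exp (l * f t b)).symm
    _ ≤ ∏ _t : Fin d, Real.exp ((l * M) ^ 2) :=
        Finset.prod_le_prod
          (fun t _ => Finset.sum_nonneg fun b _ => mul_nonneg (hg t b) (Real.exp_pos _).le)
          fun t _ => sum_mul_exp_le (hg t) (hsum t) (hmean t) (hf t) hl hlM
    _ = Real.exp (d * (l * M) ^ 2) := by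
        rw [Finset.prod_const, Finset.card_univ, Fintype.card_fin, ← Real.exp_nat_mul]

/-- Change of measure for a single output string, with an exponential penalty for strings whose
log-likelihood ratio exceeds its mean by more than `d * ε`. -/
lemma prod_le_exp_mul_prod_add {X Y : Type} [Fintype X] [Fintype Y] [DecidableEq X]
    {G P : X → Y → ℝ} (hG : IsStochastic G) (hP : IsStochastic P)
    (habs : ∀ x y, 0 < G x y → 0 < P x y) {d : ℕ} (hd : 0 < d) (x : Fin d → X) (y : Fin d → Y)
    {l : ℝ} (hl : 0 ≤ l) (ε : ℝ) :
    ∏ t, G (x t) (y t) ≤ Real.exp (d * (condDiv G P (empDist x) + ε)) * ∏ t, P (x t) (y t)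
      + Real.exp (-(l * (d * ε))) *
        ((∏ t, G (x t) (y t)) * Real.exp (l * ∑ t, centredLogRatio G P (x t) (y t))) := by
  have hGnn : 0 ≤ ∏ t, G (x t) (y t) := Finset.prod_nonneg fun t _ => (hG (x t)).1 (y t)
  have hPnn : 0 ≤ ∏ t, P (x t) (y t) := Finset.prod_nonneg fun t _ => (hP (x t)).1 (y t)
  by_cases hW : ∑ t, centredLogRatio G P (x t) (y t) ≤ d * ε
  · refine le_add_of_le_of_nonneg ?_ (by positivity)
    by_cases hpos : ∀ t, 0 < G (x t) (y t)
    · have hsum : ∑ t, Real.log (G (x t) (y t) / P (x t) (y t))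
          ≤ d * (condDiv G P (empDist x) + ε) := by
        simp only [centredLogRatio, Finset.sum_sub_distrib] at hW
        rw [mul_add, card_mul_condDiv_empDist G P hd x]
        linarith
      calc ∏ t, G (x t) (y t)
          = ∏ t, Real.exp (Real.log (G (x t) (y t) / P (x t) (y t))) * P (x t) (y t) := by
            refine Finset.prod_congr rfl fun t _ => ?_
            have hPt := habs _ _ (hpos t)
            rw [Real.exp_log (div_pos (hpos t) hPt), div_mul_cancel₀ _ hPt.ne']
        _ = Real.exp (∑ t, Real.log (G (x t) (y t) / P (x t) (y t))) * ∏ t, P (x t) (y t) := by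
            rw [Finset.prod_mul_distrib, Real.exp_sum]
        _ ≤ _ := mul_le_mul_of_nonneg_right (Real.exp_le_exp.mpr hsum) hPnn
    · push Not at hpos
      obtain ⟨t, ht⟩ := hpos
      rw [Finset.prod_eq_zero (Finset.mem_univ t) (le_antisymm ht ((hG (x t)).1 (y t)))]
      positivity
  · refine le_add_of_nonneg_of_le (by positivity) ?_
    rw [mul_left_comm, ← Real.exp_add]
    refine le_mul_of_one_le_right hGnn (Real.one_le_exp ?_)
    have := mul_le_mul_of_nonneg_left (not_le.mp hW).le hl
    linarith

/-- **Lemma 6 (change of measure).**  Let `G, P` be stochastic matrices on the same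
finite alphabets with `g_{y|x} > 0 → p_{y|x} > 0`.  For every `δ > 0` and `ε > 0` there
exists `d₀ = d₀(ε,δ,G,P)` such that for all `d > d₀`, all input strings `x ∈ X^d`, and
all events `A ⊆ Y^d`: if the product law of `G` gives `A` probability at least `δ`,
then the product law of `P` gives it probability at least
`(δ/2)·exp(-d(D(G‖P|r(x)) + ε))`, where `r(x)` is the type of `x`. -/
theorem change_of_measure
    {X Y : Type} [Fintype X] [Fintype Y] [DecidableEq X]
    (G P : X → Y → ℝ) (hG : IsStochastic G) (hP : IsStochastic P)
    (habs : ∀ x y, 0 < G x y → 0 < P x y)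
    (δ ε : ℝ) (hδ : 0 < δ) (hε : 0 < ε) :
    ∃ d0 : ℕ, ∀ d : ℕ, d0 < d → ∀ x : Fin d → X, ∀ A : Finset (Fin d → Y),
      δ ≤ (∑ y ∈ A, ∏ t, G (x t) (y t)) →
      (δ / 2) * Real.exp (-(d : ℝ) * (condDiv G P (empDist x) + ε)) ≤
        ∑ y ∈ A, ∏ t, P (x t) (y t) := by
  obtain ⟨M, hM1, hM⟩ : ∃ M : ℝ, 1 ≤ M ∧ ∀ a b, |centredLogRatio G P a b| ≤ M := by
    refine ⟨1 + ∑ a, ∑ b, |centredLogRatio G P a b|,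
      le_add_of_nonneg_right (by positivity), fun a b => ?_⟩
    have hb := Finset.single_le_sum (f := fun b => |centredLogRatio G P a b|)
      (fun _ _ => abs_nonneg _) (Finset.mem_univ b)
    have ha := Finset.single_le_sum (f := fun a => ∑ b, |centredLogRatio G P a b|)
      (fun _ _ => by positivity) (Finset.mem_univ a)
    linarith
  have hM0 : 0 < M := by linarith
  set l : ℝ := min (1 / M) (ε / (2 * M ^ 2))
  have hl : 0 < l := lt_min (by positivity) (by positivity)
  have hlM : l * M ≤ 1 := (le_div_iff₀ hM0).mp (min_le_left _ _)
  have hlε : l * (2 * M ^ 2) ≤ ε := (le_div_iff₀ (by positivity)).mp (min_le_right _ _)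
  obtain ⟨d0, hd0⟩ := exists_nat_gt (-Real.log (δ / 2) / (l * ε / 2))
  refine ⟨d0, fun d hd x A hA => ?_⟩
  have hdpos : 0 < d := by omega
  have htail : Real.exp (-(l * (d * ε))) * Real.exp (d * (l * M) ^ 2) ≤ δ / 2 := by
    rw [← Real.exp_add, ← Real.le_log_iff_exp_le (by positivity)]
    have hlarge : -Real.log (δ / 2) < d * (l * ε / 2) :=
      (div_lt_iff₀ (by positivity)).mp (hd0.trans (by exact_mod_cast hd))
    have hquad : d * l * (l * (2 * M ^ 2)) ≤ d * l * ε :=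
      mul_le_mul_of_nonneg_left hlε (by positivity)
    linarith
  have hmgf : ∑ y ∈ A, (∏ t, G (x t) (y t)) *
      Real.exp (l * ∑ t, centredLogRatio G P (x t) (y t)) ≤ Real.exp (d * (l * M) ^ 2) :=
    (Finset.sum_le_sum_of_subset_of_nonneg (Finset.subset_univ A) fun y _ _ =>
      mul_nonneg (Finset.prod_nonneg fun t _ => (hG (x t)).1 (y t)) (Real.exp_pos _).le).trans
    (sum_prod_mul_exp_sum_le (fun t => (hG (x t)).1) (fun t => (hG (x t)).2)
      (fun t => sum_mul_centredLogRatio hG P (x t)) (fun t => hM (x t)) hl.le hlM)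
  have hsplit := hA.trans (Finset.sum_le_sum fun y _ =>
    prod_le_exp_mul_prod_add hG hP habs hdpos x y hl.le ε)
  rw [Finset.sum_add_distrib, ← Finset.mul_sum, ← Finset.mul_sum] at hsplit
  have hbad := (mul_le_mul_of_nonneg_left hmgf (Real.exp_pos (-(l * (d * ε)))).le).trans htail
  rw [neg_mul, Real.exp_neg, ← div_eq_mul_inv, div_le_iff₀ (Real.exp_pos _), mul_comm]
  linarith

end
end

section
/- (Lemma 8, union bound for the FIFO repeat-until-received queue.) Let 0 < R' < 1 and 0 < beta < 1, and let (Z_t)_{t >= 1} be i.i.d. Bernoulli random variables with P(Z_t = 1) = 1 - beta (success indicators of an erasure channel). Bit k arrives at time a_k = ceil(k/R'). Define FIFO departure times recursively by D_0 = 0 and D_k = min { t : t >= max(D_{k-1} + 1, a_k) and Z_t = 1 }. Then for every bit index i >= 1 and every delay d >= 0, P( D_i > a_i + d ) <= sum_{k=1}^{i} P( sum_{t = a_k}^{a_i + d} Z_t <= i - k ). -/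
open scoped BigOperators

noncomputable section

/-- The success indicators `Z_1, …, Z_N` read off from a finite sample `ω`:
`zOf N ω t = ω (t-1)` for `1 ≤ t ≤ N`, and `true` for times beyond the horizon
(so that the FIFO recursion below is everywhere well defined; the event considered
only depends on the first `N` indicators). -/
def zOf (N : ℕ) (ω : Fin N → Bool) : ℕ → Bool :=
  fun t => if h : t - 1 < N ∧ 1 ≤ t then ω ⟨t - 1, h.1⟩ else true

/-- The i.i.d. Bernoulli(`1-β`) product weight of the sample `ω` (success with
probability `1-β`, erasure with probability `β`). -/
def bernWeight (β : ℝ) {N : ℕ} (ω : Fin N → Bool) : ℝ :=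
  ∏ t, (if ω t then 1 - β else β)

/-- The sum of `0`/`1` indicators in the time window `[m, N]`, as a cardinality. -/
lemma sum_indicator_Icc_eq_card (z : ℕ → Bool) (m N : ℕ) :
    (∑ t ∈ Finset.Icc m N, (if z t then 1 else 0)) =
      ((Finset.Icc m N).filter (fun t => z t = true)).card :=
  (Finset.card_filter _ _).symm

/-- If `[m, N]` contains at least `n + 1` successes, then the first success from `m` on
occurs by time `N`, and at least `n` successes of `[m, N]` come after it. -/
lemma sInf_success_le_and_card_after (z : ℕ → Bool) (m N n : ℕ)
    (h : n + 1 ≤ ((Finset.Icc m N).filter (fun t => z t = true)).card) :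
    sInf {t : ℕ | m ≤ t ∧ z t = true} ≤ N ∧
      n ≤ ((Finset.Icc (sInf {t : ℕ | m ≤ t ∧ z t = true} + 1) N).filter
        (fun t => z t = true)).card := by
  set T := sInf {t : ℕ | m ≤ t ∧ z t = true} with hT
  have hfirst : ∀ t, m ≤ t → z t = true → T ≤ t := fun t hmt hzt => Nat.sInf_le ⟨hmt, hzt⟩
  constructor
  · obtain ⟨t, ht⟩ := Finset.card_pos.mp (Nat.succ_pos n |>.trans_le h)
    simp only [Finset.mem_filter, Finset.mem_Icc] at ht
    exact (hfirst t ht.1.1 ht.2).trans ht.1.2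
  · have hsub : (Finset.Icc m N).filter (fun t => z t = true) ⊆
        insert T ((Finset.Icc (T + 1) N).filter (fun t => z t = true)) := by
      intro t ht
      simp only [Finset.mem_insert, Finset.mem_filter, Finset.mem_Icc] at ht ⊢
      have := hfirst t ht.1.1 ht.2
      by_cases hTt : t = T
      · exact Or.inl hTt
      · exact Or.inr ⟨⟨by omega, ht.1.2⟩, ht.2⟩
    have := (Finset.card_le_card hsub).trans (Finset.card_insert_le _ _)
    omega

/-- If for each `k ∈ [1, i]` the window from the arrival of bit `k` to `N` contains more than
`i - k` successes, then bit `i` departs by time `N`. -/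
lemma fifo_departure_le (a D : ℕ → ℕ) (z : ℕ → Bool) (i N : ℕ) (hi : 1 ≤ i) (ha : 1 ≤ a 1)
    (hD0 : D 0 = 0)
    (hDk : ∀ k, D (k + 1) = sInf {t : ℕ | max (D k + 1) (a (k + 1)) ≤ t ∧ z t = true})
    (hwin : ∀ k ∈ Finset.Icc 1 i,
      i - k < ((Finset.Icc (a k) N).filter (fun t => z t = true)).card) :
    D i ≤ N := by
  have hstep : ∀ j < i,
      i - j ≤ ((Finset.Icc (D j + 1) N).filter (fun t => z t = true)).card →
      D (j + 1) ≤ N ∧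
        i - (j + 1) ≤ ((Finset.Icc (D (j + 1) + 1) N).filter (fun t => z t = true)).card := by
    intro j hj hcard
    rw [hDk j]
    apply sInf_success_le_and_card_after
    rcases max_choice (D j + 1) (a (j + 1)) with hmax | hmax <;> rw [hmax]
    · omega
    · have := hwin (j + 1) (Finset.mem_Icc.mpr ⟨by omega, by omega⟩)
      omega
  have hcount : ∀ j ≤ i,
      i - j ≤ ((Finset.Icc (D j + 1) N).filter (fun t => z t = true)).card := by
    intro j
    induction j with
    | zero =>
      intro _
      have hone := hwin 1 (Finset.mem_Icc.mpr ⟨le_rfl, hi⟩)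
      have hmono : ((Finset.Icc (a 1) N).filter (fun t => z t = true)).card ≤
          ((Finset.Icc (D 0 + 1) N).filter (fun t => z t = true)).card :=
        Finset.card_le_card
          (Finset.filter_subset_filter _ (Finset.Icc_subset_Icc_left (by omega)))
      omega
    | succ j ih => exact fun hj => (hstep j (by omega) (ih (by omega))).2
  obtain ⟨j, rfl⟩ := Nat.exists_eq_add_of_le' hi
  exact (hstep j (by omega) (hcount j (by omega))).1

lemma bernWeight_nonneg {β : ℝ} (hβ0 : 0 ≤ β) (hβ1 : β ≤ 1) {N : ℕ} (ω : Fin N → Bool) :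
    0 ≤ bernWeight β ω :=
  Finset.prod_nonneg fun t _ => by split_ifs <;> linarith

/-- **Lemma 8 (union bound for the FIFO repeat-until-received queue).**  Let
`0 < R' < 1` and `0 < β < 1`, with i.i.d. Bernoulli(`1-β`) success indicators `Z_t`.
Bit `k` arrives at `a k = ⌈k/R'⌉`, and FIFO departure times satisfy `D 0 = 0` and
`D (k+1) = min {t : t ≥ max (D k + 1) (a (k+1)) ∧ Z_t = 1}`.  Then for every bit index
`i ≥ 1` and delay `d ≥ 0` (with horizon `N = a i + d`),
`P(D i > a i + d) ≤ ∑_{k=1}^i P(∑_{t=a k}^{a i + d} Z_t ≤ i - k)`. -/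
theorem fifo_union_bound
    (R' β : ℝ) (hR'0 : 0 < R') (hR'1 : R' < 1) (hβ0 : 0 < β) (hβ1 : β < 1)
    (a : ℕ → ℕ) (ha : ∀ k, a k = Nat.ceil ((k : ℝ) / R'))
    (Dep : (ℕ → Bool) → ℕ → ℕ)
    (hD0 : ∀ z, Dep z 0 = 0)
    (hDk : ∀ z k, Dep z (k + 1) =
      sInf {t : ℕ | max (Dep z k + 1) (a (k + 1)) ≤ t ∧ z t = true})
    (i d : ℕ) (hi : 1 ≤ i) :
    (∑ ω : Fin (a i + d) → Bool,
        bernWeight β ω * (if a i + d < Dep (zOf (a i + d) ω) i then 1 else 0))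
    ≤ ∑ k ∈ Finset.Icc 1 i,
        ∑ ω : Fin (a i + d) → Bool,
          bernWeight β ω *
            (if (∑ t ∈ Finset.Icc (a k) (a i + d),
                  (if zOf (a i + d) ω t then 1 else 0)) ≤ i - k
              then (1 : ℝ) else 0) := by
  rw [Finset.sum_comm]
  refine Finset.sum_le_sum fun ω _ => ?_
  rw [← Finset.mul_sum]
  refine mul_le_mul_of_nonneg_left ?_ (bernWeight_nonneg hβ0.le hβ1.le ω)
  have hnonneg : ∀ k ∈ Finset.Icc 1 i,
      (0 : ℝ) ≤ if (∑ t ∈ Finset.Icc (a k) (a i + d),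
        (if zOf (a i + d) ω t then 1 else 0)) ≤ i - k then (1 : ℝ) else 0 :=
    fun k _ => by split_ifs <;> norm_num
  split_ifs with hlate
  · obtain ⟨k, hk, hfew⟩ : ∃ k ∈ Finset.Icc 1 i,
        (∑ t ∈ Finset.Icc (a k) (a i + d), (if zOf (a i + d) ω t then 1 else 0)) ≤ i - k := by
      by_contra! hmany
      have ha1 : 1 ≤ a 1 := by
        rw [ha, Nat.one_le_ceil_iff]
        positivity
      refine hlate.not_ge (fifo_departure_le a _ (zOf (a i + d) ω) i (a i + d) hi ha1
        (hD0 _) (hDk _) fun k hk => ?_)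
      rw [← sum_indicator_Icc_eq_card]
      exact hmany k hk
    refine le_trans ?_ (Finset.single_le_sum hnonneg hk)
    rw [if_pos hfew]
  · exact Finset.sum_nonneg hnonneg

end
end

section
/- (Slope of the Theorem 5 achievable region near capacity.) Let E_0 : [0, infinity) -> R satisfy E_0(0) = 0, admit a second-order Taylor expansion at 0: E_0(rho) = C rho + (1/2) E_0''(0) rho^2 + o(rho^2) as rho -> 0+, with C > 0 and E_0''(0) <= 0, and suppose E_0(1) > 0 and E_0(rho) > 0 for all sufficiently small rho > 0. Define E'(rho) = (1/E_0(rho) + 1/E_0(1))^{-1} and R(rho) = E'(rho)/rho for rho > 0. Then lim_{rho -> 0+} R(rho) = C and lim_{rho -> 0+} E'(rho)/(R(rho) - C) = -E_0(1) / ( C - (E_0(1)/(2C)) E_0''(0) ); in particular the parametric curve (R(rho), E'(rho)) approaches the point (C, 0) with the strictly negative slope -E_0(1)/(C - (E_0(1)/(2C)) E_0''(0)). -/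
open Filter Asymptotics

noncomputable section

/-- **Slope of the Theorem 5 achievable region near capacity.**  Let `E0` satisfy
`E0 0 = 0` and a second-order Taylor expansion `E0 ρ = C ρ + (1/2) E0''(0) ρ² + o(ρ²)`
as `ρ → 0⁺`, with `C > 0` and `E0''(0) ≤ 0`; suppose `E0 1 > 0` and `E0 ρ > 0` for all
sufficiently small `ρ > 0`.  With `E'(ρ) = (1/E0 ρ + 1/E0 1)⁻¹` and `R(ρ) = E'(ρ)/ρ`,
one has `R(ρ) → C` and `E'(ρ)/(R(ρ) - C) → -E0(1)/(C - (E0(1)/(2C)) E0''(0))` as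
`ρ → 0⁺`; the latter slope is strictly negative. -/
theorem timesharing_slope_near_capacity
    (E0 : ℝ → ℝ) (C c2 : ℝ) (hC : 0 < C) (hc2 : c2 ≤ 0) (hE00 : E0 0 = 0)
    (hE01 : 0 < E0 1)
    (hpos : ∀ᶠ ρ in nhdsWithin 0 (Set.Ioi 0), 0 < E0 ρ)
    (htaylor : (fun ρ => E0 ρ - (C * ρ + c2 / 2 * ρ ^ 2))
      =o[nhdsWithin 0 (Set.Ioi 0)] fun ρ => ρ ^ 2) :
    Tendsto (fun ρ => ((E0 ρ)⁻¹ + (E0 1)⁻¹)⁻¹ / ρ) (nhdsWithin 0 (Set.Ioi 0))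
      (nhds C) ∧
    Tendsto (fun ρ => ((E0 ρ)⁻¹ + (E0 1)⁻¹)⁻¹ /
        (((E0 ρ)⁻¹ + (E0 1)⁻¹)⁻¹ / ρ - C))
      (nhdsWithin 0 (Set.Ioi 0))
      (nhds (-(E0 1) / (C - E0 1 / (2 * C) * c2))) ∧
    -(E0 1) / (C - E0 1 / (2 * C) * c2) < 0 := by
  set A := E0 1
  let q : ℝ → ℝ := fun ρ => (E0 ρ - (C * ρ + c2 / 2 * ρ ^ 2)) / ρ ^ 2
  let g : ℝ → ℝ := fun ρ => C + ρ * (c2 / 2 + q ρ)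
  have hq : Tendsto q (nhdsWithin 0 (Set.Ioi 0)) (nhds 0) := htaylor.tendsto_div_nhds_zero
  have hρ : Tendsto (fun ρ : ℝ => ρ) (nhdsWithin 0 (Set.Ioi 0)) (nhds 0) :=
    tendsto_id.mono_left nhdsWithin_le_nhds
  have hg : Tendsto g (nhdsWithin 0 (Set.Ioi 0)) (nhds C) := by
    simpa using tendsto_const_nhds.add (hρ.mul (tendsto_const_nhds.add hq))
  have hfactor : ∀ ρ : ℝ, 0 < ρ → E0 ρ = ρ * g ρ := by
    intro ρ h
    simp only [g, q]
    field_simp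
    ring
  have hexponent : ∀ ρ : ℝ, 0 < ρ → 0 < E0 ρ →
      ((E0 ρ)⁻¹ + A⁻¹)⁻¹ = ρ * (g ρ * A / (A + ρ * g ρ)) := by
    intro ρ h hE
    rw [← mul_div_assoc, ← mul_assoc, ← hfactor ρ h]
    field_simp
  have hden : 0 < C - A / (2 * C) * c2 := by
    have : A / (2 * C) * c2 ≤ 0 := mul_nonpos_of_nonneg_of_nonpos (by positivity) hc2
    linarith
  refine ⟨?_, ?_, div_neg_of_neg_of_pos (by linarith) hden⟩
  · have hlim : Tendsto (fun ρ => g ρ * A / (A + ρ * g ρ)) (nhdsWithin 0 (Set.Ioi 0))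
        (nhds (C * A / (A + 0 * C))) :=
      (hg.mul_const A).div (tendsto_const_nhds.add (hρ.mul hg)) (by simpa using hE01.ne')
    rw [zero_mul, add_zero, mul_div_cancel_right₀ _ hE01.ne'] at hlim
    refine hlim.congr' ?_
    filter_upwards [hpos, self_mem_nhdsWithin] with ρ hE h
    rw [hexponent ρ h hE, mul_div_cancel_left₀ _ (ne_of_gt h)]
  · have hne : A * (c2 / 2 + 0) - C * C ≠ 0 := by
      nlinarith [mul_nonpos_of_nonneg_of_nonpos hE01.le hc2, mul_pos hC hC]
    have hlim : Tendsto (fun ρ => g ρ * A / (A * (c2 / 2 + q ρ) - C * g ρ))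
        (nhdsWithin 0 (Set.Ioi 0)) (nhds (C * A / (A * (c2 / 2 + 0) - C * C))) :=
      (hg.mul_const A).div
        (((tendsto_const_nhds.add hq).const_mul A).sub (hg.const_mul C)) hne
    have hvalue : C * A / (A * (c2 / 2 + 0) - C * C) = -A / (C - A / (2 * C) * c2) := by
      rw [div_eq_div_iff hne hden.ne']
      field_simp
      ring
    rw [hvalue] at hlim
    refine hlim.congr' ?_
    filter_upwards [hpos, self_mem_nhdsWithin] with ρ hE h
    have h : 0 < ρ := h
    have hsum : 0 < A + ρ * g ρ := by
      rw [← hfactor ρ h]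
      positivity
    have hgap : g ρ * A / (A + ρ * g ρ) - C =
        ρ / (A + ρ * g ρ) * (A * (c2 / 2 + q ρ) - C * g ρ) := by
      rw [div_sub' hsum.ne', div_mul_eq_mul_div]
      congr 1
      simp only [g]
      ring
    rw [hexponent ρ h hE, mul_div_cancel_left₀ _ h.ne', hgap,
      ← mul_div_mul_left (g ρ * A) _ (div_pos h hsum).ne']
    congr 1
    ring

end
end

section
/- (The feedback gain at rate 1/2 over the BEC is unbounded as beta -> 1/2.) For beta in (0, 1/2), let E_a = ln(1 - beta) - ln(beta) be the fixed-delay error exponent achieved with noiseless feedback at rate 1/2 bits per channel use over the binary erasure channel with erasure probability beta, and let E_sp = -ln(4 beta (1 - beta))/2 be the corresponding sphere-packing exponent. Then both quantities are strictly positive for beta in (0,1/2), and the ratio E_a/E_sp tends to infinity as beta -> (1/2)-: lim_{beta -> 1/2^-} ( ln((1-beta)/beta) ) / ( -ln(4 beta (1-beta))/2 ) = +infinity. -/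
open Filter

noncomputable section

/-- The fixed-delay exponent is at least the gap `1 - 2β` to the critical erasure probability. -/
lemma one_sub_two_mul_le_log_sub_log {β : ℝ} (h0 : 0 < β) (h1 : β < 1 / 2) :
    1 - 2 * β ≤ Real.log (1 - β) - Real.log β := by
  have hpos : 0 < 1 - β := by linarith
  rw [← Real.log_div hpos.ne' h0.ne']
  have h := Real.one_sub_inv_le_log_of_pos (div_pos hpos h0)
  rw [inv_div] at h
  have hdiv : β / (1 - β) ≤ 2 * β := by
    rw [div_le_iff₀ hpos]
    nlinarith
  linarith

/-- The sphere-packing exponent is positive below the critical erasure probability. -/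
lemma neg_log_four_mul_div_two_pos {β : ℝ} (h0 : 0 < β) (h1 : β < 1 / 2) :
    0 < -Real.log (4 * β * (1 - β)) / 2 := by
  have hpos : 0 < 4 * β * (1 - β) := mul_pos (by linarith) (by linarith)
  have h := Real.log_neg hpos (by nlinarith)
  linarith

/-- The sphere-packing exponent is at most quadratic in the gap `1 - 2β`. -/
lemma neg_log_four_mul_div_two_le_sq {β : ℝ} (h0 : 1 / 4 < β) (h1 : β < 1 / 2) :
    -Real.log (4 * β * (1 - β)) / 2 ≤ (1 - 2 * β) ^ 2 := by
  have hpos : 0 < 4 * β * (1 - β) := mul_pos (by linarith) (by linarith)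
  have hhalf : 1 / 2 ≤ 4 * β * (1 - β) := by nlinarith
  have h := Real.one_sub_inv_le_log_of_pos hpos
  have hinv : (4 * β * (1 - β))⁻¹ ≤ 1 + 2 * (1 - 2 * β) ^ 2 := by
    rw [inv_le_iff_one_le_mul₀ hpos]
    nlinarith [mul_nonneg (sq_nonneg (1 - 2 * β)) (sub_nonneg.2 hhalf)]
  linarith

/-- **The feedback gain at rate 1/2 over the BEC is unbounded as `β → 1/2⁻`.**
For `β ∈ (0,1/2)`, the fixed-delay exponent achieved with noiseless feedback at rate
`1/2` over `BEC(β)` is `E_a = ln(1-β) - ln β` and the sphere-packing exponent is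
`E_sp = -ln(4β(1-β))/2`; both are strictly positive on `(0,1/2)`, and their ratio
`E_a/E_sp` tends to `+∞` as `β → (1/2)⁻`. -/
theorem bec_feedback_gain_unbounded :
    (∀ β : ℝ, 0 < β → β < 1 / 2 →
      0 < Real.log (1 - β) - Real.log β ∧ 0 < -Real.log (4 * β * (1 - β)) / 2) ∧
    Tendsto
      (fun β : ℝ => (Real.log (1 - β) - Real.log β) / (-Real.log (4 * β * (1 - β)) / 2))
      (nhdsWithin (1 / 2 : ℝ) (Set.Iio (1 / 2))) atTop := by
  refine ⟨fun β h0 h1 => ⟨?_, neg_log_four_mul_div_two_pos h0 h1⟩, ?_⟩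
  · linarith [one_sub_two_mul_le_log_sub_log h0 h1]
  have hgap : Tendsto (fun β : ℝ => 1 - 2 * β) (nhdsWithin (1 / 2 : ℝ) (Set.Iio (1 / 2)))
      (nhdsWithin 0 (Set.Ioi 0)) := by
    refine tendsto_nhdsWithin_iff.2 ⟨?_, ?_⟩
    · have hcont : Continuous fun β : ℝ => 1 - 2 * β := by fun_prop
      exact (hcont.tendsto' _ _ (by norm_num)).mono_left nhdsWithin_le_nhds
    · filter_upwards [self_mem_nhdsWithin] with β (hβ : β < 1 / 2)
      exact Set.mem_Ioi.2 (by linarith)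
  refine tendsto_atTop_mono' _ ?_ (tendsto_inv_nhdsGT_zero.comp hgap)
  filter_upwards [Ioo_mem_nhdsLT (show (1 / 4 : ℝ) < 1 / 2 by norm_num)] with β hβ
  have h0 : 0 < β := by linarith [hβ.1]
  have hd : 0 < 1 - 2 * β := by linarith [hβ.2]
  have hEa := one_sub_two_mul_le_log_sub_log h0 hβ.2
  have hEsp := neg_log_four_mul_div_two_le_sq hβ.1 hβ.2
  rw [Function.comp_apply, le_div_iff₀ (neg_log_four_mul_div_two_pos h0 hβ.2),
    inv_mul_le_iff₀ hd]
  nlinarith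

end
end
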